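/- Under the stated assumptions, the variance of Y_N satisfies Var(Y_N) ∼ σ² log N as N → ∞. -/

import Mathlib

open scoped BigOperators ENNReal
open Filter Asymptotics

noncomputable section

/-- `af P m n` is the number of ordered `m`-tuples `(n₁,…,n_m)` of elements of `P`
with product `n` (so `af P 0 n = 1` iff `n = 1`). -/
def af (P : Set ℕ) (m n : ℕ) : ℕ :=
  Nat.card {t : Fin m → ℕ // (∀ i, t i ∈ P) ∧ ∏ i, t i = n}

/-- `aTot P n = a(n) = Σ_{m ≥ 0} a_m(n)`. -/
def aTot (P : Set ℕ) (n : ℕ) : ℝ := ∑' m : ℕ, (af P m n : ℝ)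

/-- `Acum P N = A(N) = Σ_{1 ≤ n ≤ N} a(n)`. -/
def Acum (P : Set ℕ) (N : ℕ) : ℝ := ∑ n ∈ Finset.Icc 1 N, aTot P n

/-- The Dirichlet series `𝒫(x) = Σ_{n ∈ 𝒫} n^{-x}` at a real point. -/
def Pval (P : Set ℕ) (x : ℝ) : ℝ := ∑' n : P, ((n : ℕ) : ℝ) ^ (-x)

/-- `𝒫'(x) = -Σ_{n ∈ 𝒫} n^{-x} log n`. -/
def Pderiv1 (P : Set ℕ) (x : ℝ) : ℝ := -∑' n : P, ((n : ℕ) : ℝ) ^ (-x) * Real.log (n : ℕ)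

/-- `𝒫''(x) = Σ_{n ∈ 𝒫} n^{-x} (log n)^2`. -/
def Pderiv2 (P : Set ℕ) (x : ℝ) : ℝ := ∑' n : P, ((n : ℕ) : ℝ) ^ (-x) * (Real.log (n : ℕ)) ^ 2

/-- The abscissa of convergence `κ` of the Dirichlet series of `P`, as an extended real
(`⊥` when `P` is finite). -/
def kappa (P : Set ℕ) : EReal :=
  sInf {x : EReal | ∃ r : ℝ, x = (r : EReal) ∧ Summable (fun n : P => ((n : ℕ) : ℝ) ^ (-r))}

open Classical in
/-- The (possibly infinite) value `𝒫(x) ∈ (0,∞]` of the Dirichlet series at an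
extended-real point; at `x = -∞` every term `n^{-x}` is infinite. -/
def PvalE (P : Set ℕ) (x : EReal) : ℝ≥0∞ :=
  if x = ⊥ then ⊤ else ∑' n : P, ENNReal.ofReal (((n : ℕ) : ℝ) ^ (-x.toReal))

/-!
Put mass `n ^ (-ρ)` at the point `log n` for each `n ∈ P`; since `𝒫(ρ) = 1` this is the law of a
random jump. The number of factorizations of the integers up to `exp y`, divided by `exp (ρ * y)`,
solves a renewal equation `h y - ∑ p i * h (y - step i) = exp (-ρ * y)` on `[0, ∞)`, and so do the
sums weighted by the number `m` of factors and by `m ^ 2`, with `h` and lower moments as sources.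

A maximum principle turns every bound for the left side (the defect) of such an equation into a
bound for its solution. It makes `h` bounded above and below, but `h` need not converge, since the
jumps may lie in a lattice. By the Choquet–Deny argument `h` does converge along each coset of the
group generated by the jumps. Hence, for large `y`, the variance of `h (y - X)` over a random jump
`X` is dominated by the defect of a function as small as we like.

Recentring the first moment at `y / mean` leaves as source, up to an exponentially small term, the
covariance of `h (y - X)` with a centred weight; by Cauchy–Schwarz the recentred moment is
`o(√y)`. The source of the recentred second moment consists of such covariances with `h` and with
the recentred first moment, and the same estimate gives `o(y)`, which is the theorem at
`y = log N`.
-/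

/-- A step law: a countable family of jumps `step i`, each taken with probability `prob i`. The
jumps are bounded below by `gap`, are locally finite, and have an exponential moment of order
`rate`. -/
structure StepLaw (ι : Type*) where
  prob : ι → ℝ
  step : ι → ℝ
  gap : ℝ
  rate : ℝ
  prob_pos : ∀ i, 0 < prob i
  hasSum_prob : HasSum prob 1
  gap_pos : 0 < gap
  gap_le_step : ∀ i, gap ≤ step i
  finite_step_le : ∀ y, {i | step i ≤ y}.Finite
  rate_pos : 0 < rate
  summable_expMoment : Summable fun i => prob i * Real.exp (rate * step i)

namespace StepLaw

variable {ι : Type*} (R : StepLaw ι)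

lemma step_pos (i : ι) : 0 < R.step i := R.gap_pos.trans_le (R.gap_le_step i)

lemma nonempty (R : StepLaw ι) : Nonempty ι := by
  by_contra hι
  rw [not_nonempty_iff] at hι
  exact zero_ne_one (hasSum_empty.unique R.hasSum_prob)

/-- The finitely many jumps of size at most `y`. -/
def upTo (y : ℝ) : Finset ι := (R.finite_step_le y).toFinset

@[simp] lemma mem_upTo {y : ℝ} {i : ι} : i ∈ R.upTo y ↔ R.step i ≤ y := by simp [upTo]

lemma upTo_mono {x y : ℝ} (hxy : x ≤ y) : R.upTo x ⊆ R.upTo y := fun _ hi =>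
  R.mem_upTo.2 ((R.mem_upTo.1 hi).trans hxy)

/-- Convolution of a function on the half-line `[0, ∞)` with the measure putting mass `w i` at
`step i`; only arguments `y - step i ≥ 0` enter, whatever the function does on negative reals. -/
def conv (w : ι → ℝ) : (ℝ → ℝ) →ₗ[ℝ] (ℝ → ℝ) where
  toFun f y := ∑ i ∈ R.upTo y, w i * f (y - R.step i)
  map_add' f g := by ext y; simp only [Pi.add_apply, mul_add, Finset.sum_add_distrib]
  map_smul' c f := by
    ext y
    simp only [Pi.smul_apply, smul_eq_mul, Finset.mul_sum, RingHom.id_apply]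
    exact Finset.sum_congr rfl fun i _ => mul_left_comm _ _ _

lemma conv_apply (w : ι → ℝ) (f : ℝ → ℝ) (y : ℝ) :
    R.conv w f y = ∑ i ∈ R.upTo y, w i * f (y - R.step i) := rfl

/-- The defect of `f` in the homogeneous renewal equation `f = conv prob f`. -/
def defect : (ℝ → ℝ) →ₗ[ℝ] (ℝ → ℝ) := LinearMap.id - R.conv R.prob

lemma defect_apply (f : ℝ → ℝ) (y : ℝ) : R.defect f y = f y - R.conv R.prob f y := rfl

lemma conv_mono {f g : ℝ → ℝ} {y : ℝ} (hfg : ∀ x, 0 ≤ x → f x ≤ g x) :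
    R.conv R.prob f y ≤ R.conv R.prob g y :=
  Finset.sum_le_sum fun i hi => mul_le_mul_of_nonneg_left
    (hfg _ (sub_nonneg.2 (R.mem_upTo.1 hi))) (R.prob_pos i).le

lemma conv_nonneg {f : ℝ → ℝ} {y : ℝ} (hf : ∀ x, 0 ≤ x → 0 ≤ f x) : 0 ≤ R.conv R.prob f y := by
  simpa using R.conv_mono (f := 0) hf

lemma prob_mul_le_conv {f : ℝ → ℝ} {y : ℝ} (hf : ∀ x, 0 ≤ x → 0 ≤ f x) {a : ι}
    (ha : R.step a ≤ y) : R.prob a * f (y - R.step a) ≤ R.conv R.prob f y :=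
  Finset.single_le_sum (f := fun i => R.prob i * f (y - R.step i))
    (fun i hi => mul_nonneg (R.prob_pos i).le (hf _ (sub_nonneg.2 (R.mem_upTo.1 hi))))
    (R.mem_upTo.2 ha)

lemma conv_comp_sub {f : ℝ → ℝ} (hf : ∀ x < 0, f x = 0) (w : ι → ℝ) {t : ℝ} (ht : 0 ≤ t) (y : ℝ) :
    R.conv w (fun x => f (x - t)) y = R.conv w f (y - t) := by
  simp only [conv_apply, sub_right_comm _ _ t]
  refine (Finset.sum_subset (R.upTo_mono (sub_le_self y ht)) fun i _ hi => ?_).symm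
  rw [mem_upTo, not_le] at hi
  rw [hf _ (by linarith), mul_zero]

lemma defect_comp_sub {f : ℝ → ℝ} (hf : ∀ x < 0, f x = 0) {t : ℝ} (ht : 0 ≤ t) (y : ℝ) :
    R.defect (fun x => f (x - t)) y = R.defect f (y - t) := by
  rw [defect_apply, defect_apply, R.conv_comp_sub hf _ ht]

lemma hasSum_conv {f : ℝ → ℝ} (hf : ∀ x < 0, f x = 0) (w : ι → ℝ) (y : ℝ) :
    HasSum (fun i => w i * f (y - R.step i)) (R.conv w f y) :=
  hasSum_sum_of_ne_finset_zero fun i hi => by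
    rw [mem_upTo, not_le] at hi
    rw [hf _ (by linarith), mul_zero]

/-- The probability of a jump larger than `x`. -/
def tail (x : ℝ) : ℝ := 1 - ∑ i ∈ R.upTo x, R.prob i

lemma tail_nonneg (x : ℝ) : 0 ≤ R.tail x :=
  sub_nonneg.2 (sum_le_hasSum _ (fun i _ => (R.prob_pos i).le) R.hasSum_prob)

lemma sum_prob_upTo (x : ℝ) : ∑ i ∈ R.upTo x, R.prob i = 1 - R.tail x := (sub_sub_cancel _ _).symm

lemma prob_le_tail {x : ℝ} {a : ι} (ha : x < R.step a) : R.prob a ≤ R.tail x := by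
  have h := sum_le_hasSum (Finset.cons a (R.upTo x) (by simpa using ha))
    (fun i _ => (R.prob_pos i).le) R.hasSum_prob
  rw [Finset.sum_cons, sum_prob_upTo] at h
  linarith

lemma hasSum_indicator_upTo (x : ℝ) :
    HasSum (Set.indicator (R.upTo x) R.prob) (1 - R.tail x) :=
  R.sum_prob_upTo x ▸ hasSum_subtype_iff_indicator.1 ((R.upTo x).hasSum R.prob)

/-- The exponential moment of order `rate`. -/
def expMoment : ℝ := ∑' i, R.prob i * Real.exp (R.rate * R.step i)

lemma expMoment_nonneg : 0 ≤ R.expMoment :=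
  tsum_nonneg fun i => mul_nonneg (R.prob_pos i).le (Real.exp_pos _).le

lemma tail_le (x : ℝ) : R.tail x ≤ R.expMoment * Real.exp (-R.rate * x) := by
  have hexp := R.summable_expMoment.hasSum.mul_right (Real.exp (-R.rate * x))
  suffices h : 1 ≤ 1 - R.tail x + R.expMoment * Real.exp (-R.rate * x) by linarith
  refine hasSum_le (fun i => ?_) R.hasSum_prob ((R.hasSum_indicator_upTo x).add hexp)
  have hp := R.prob_pos i
  by_cases hi : i ∈ R.upTo x
  · rw [Set.indicator_of_mem (Finset.mem_coe.2 hi)]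
    exact le_add_of_nonneg_right (by positivity)
  · rw [Set.indicator_of_notMem (by simpa using hi), zero_add, mul_assoc, ← Real.exp_add]
    rw [mem_upTo, not_le] at hi
    refine le_mul_of_one_le_right hp.le (Real.one_le_exp ?_)
    nlinarith [R.rate_pos]

lemma tail_add_le (x y : ℝ) :
    R.tail (x + y) ≤ R.expMoment * Real.exp (-R.rate * x) * Real.exp (-R.rate * y) := by
  rw [mul_assoc, ← Real.exp_add, ← mul_add]
  exact R.tail_le _

section MaximumPrinciple

/-- A set of nonnegative reals stable under the jumps that keep it nonnegative. -/
structure IsStepClosed (R : StepLaw ι) (E : Set ℝ) : Prop where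
  nonneg : ∀ y ∈ E, 0 ≤ y
  sub_step_mem : ∀ y ∈ E, ∀ i, R.step i ≤ y → y - R.step i ∈ E

lemma isStepClosed_Ici : R.IsStepClosed (Set.Ici 0) :=
  ⟨fun _ hy => hy, fun _ _ _ hi => sub_nonneg.2 hi⟩

lemma isStepClosed_Icc (X : ℝ) : R.IsStepClosed (Set.Icc 0 X) :=
  ⟨fun _ hy => hy.1, fun _ hy i hi =>
    ⟨sub_nonneg.2 hi, (sub_le_self _ (R.step_pos i).le).trans hy.2⟩⟩

variable {R} {E : Set ℝ} {f V : ℝ → ℝ}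

theorem le_of_defect_le (hE : R.IsStepClosed E)
    (h : ∀ y ∈ E, f y ≤ V y ∨ R.defect f y ≤ R.defect V y) : ∀ y ∈ E, f y ≤ V y := by
  suffices hn : ∀ n : ℕ, ∀ y ∈ E, y < n * R.gap → f y ≤ V y by
    intro y hy
    obtain ⟨n, hn'⟩ := exists_nat_gt (y / R.gap)
    exact hn n y hy ((div_lt_iff₀ R.gap_pos).1 hn')
  intro n
  induction n with
  | zero =>
    intro y hy hlt
    rw [Nat.cast_zero, zero_mul] at hlt
    exact absurd (hE.nonneg y hy) hlt.not_ge
  | succ n ih =>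
    intro y hy hlt
    refine (h y hy).elim id fun hdef => ?_
    have hconv : R.conv R.prob f y ≤ R.conv R.prob V y := by
      refine Finset.sum_le_sum fun i hi => mul_le_mul_of_nonneg_left ?_ (R.prob_pos i).le
      refine ih _ (hE.sub_step_mem y hy i (R.mem_upTo.1 hi)) ?_
      push_cast at hlt
      linarith [R.gap_le_step i]
    rw [defect_apply, defect_apply] at hdef
    linarith

theorem abs_le_of_abs_defect_le (hE : R.IsStepClosed E)
    (h : ∀ y ∈ E, |f y| ≤ V y ∨ |R.defect f y| ≤ R.defect V y) : ∀ y ∈ E, |f y| ≤ V y := by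
  refine fun y hy => abs_le'.2 ⟨le_of_defect_le hE (fun x hx => ?_) y hy,
    le_of_defect_le (f := -f) hE (fun x hx => ?_) y hy⟩
  · exact (h x hx).imp (le_abs_self _).trans (le_abs_self _).trans
  · rw [map_neg]
    exact (h x hx).imp (neg_le_abs _).trans (neg_le_abs _).trans

end MaximumPrinciple

lemma defect_const (c y : ℝ) : R.defect (fun _ => c) y = c * R.tail y := by
  rw [defect_apply, conv_apply, ← Finset.sum_mul, sum_prob_upTo]
  ring

lemma one_le_defect_linear {y : ℝ} (hy : 0 ≤ y) : 1 ≤ R.defect (fun x => 1 + x / R.gap) y := by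
  have hgap := R.gap_pos
  have hconv : R.conv R.prob (fun x => 1 + x / R.gap) y
      ≤ ∑ i ∈ R.upTo y, R.prob i * (y / R.gap) := by
    refine Finset.sum_le_sum fun i _ => mul_le_mul_of_nonneg_left ?_ (R.prob_pos i).le
    simp only [sub_div]
    linarith [(one_le_div hgap).2 (R.gap_le_step i)]
  rw [← Finset.sum_mul, sum_prob_upTo] at hconv
  rw [defect_apply]
  nlinarith [R.tail_nonneg y, div_nonneg hy hgap.le]

lemma conv_le_conv_add_mul_tail {f g : ℝ → ℝ} {K L : ℝ} (hK : 0 ≤ K)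
    (hge : ∀ x, L ≤ x → f x ≤ g x) (hlt : ∀ x, 0 ≤ x → x < L → f x ≤ g x + K) (y : ℝ) :
    R.conv R.prob f y ≤ R.conv R.prob g y + K * R.tail (y - L) := by
  have hfar : ∑ i ∈ R.upTo y, (R.prob i - Set.indicator (R.upTo (y - L)) R.prob i)
      ≤ R.tail (y - L) := by
    have hsum := R.hasSum_prob.sub (R.hasSum_indicator_upTo (y - L))
    rw [sub_sub_cancel] at hsum
    exact sum_le_hasSum _ (fun i _ => sub_nonneg.2
      (Set.indicator_le_self' (fun _ _ => (R.prob_pos i).le) i)) hsum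
  refine le_trans ?_ (add_le_add_right (mul_le_mul_of_nonneg_left hfar hK) _)
  rw [conv_apply, conv_apply, Finset.mul_sum, ← Finset.sum_add_distrib]
  refine Finset.sum_le_sum fun i hi => ?_
  have hp := R.prob_pos i
  by_cases hi' : i ∈ R.upTo (y - L)
  · rw [Set.indicator_of_mem (Finset.mem_coe.2 hi'), sub_self, mul_zero, add_zero]
    exact mul_le_mul_of_nonneg_left (hge _ (by linarith [R.mem_upTo.1 hi'])) hp.le
  · rw [Set.indicator_of_notMem (Finset.mem_coe.not.2 hi'), sub_zero, mul_comm K, ← mul_add]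
    rw [mem_upTo, not_le] at hi'
    exact mul_le_mul_of_nonneg_left
      (hlt _ (sub_nonneg.2 (R.mem_upTo.1 hi)) (by linarith)) hp.le

section Truncation

variable {R} {f : ℝ → ℝ} {L y : ℝ}

lemma defect_indicator_Ici_of_lt (f : ℝ → ℝ) (hy : y < L) :
    R.defect ((Set.Ici L).indicator f) y = 0 := by
  have hzero : ∀ x < L, (Set.Ici L).indicator f x = 0 := fun x hx =>
    Set.indicator_of_notMem (Set.notMem_Ici.2 hx) f
  rw [defect_apply, conv_apply, hzero y hy, Finset.sum_eq_zero, sub_zero]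
  intro i _
  rw [hzero _ (by linarith [R.step_pos i]), mul_zero]

lemma le_defect_indicator_Ici (hf : ∀ x, 0 ≤ x → 0 ≤ f x) (hy : L ≤ y) :
    R.defect f y ≤ R.defect ((Set.Ici L).indicator f) y := by
  rw [defect_apply, defect_apply, Set.indicator_of_mem (Set.mem_Ici.2 hy)]
  exact sub_le_sub_left (R.conv_mono fun x hx =>
    Set.indicator_le_self' (fun _ _ => hf x hx) x) _

lemma abs_defect_indicator_Ici_sub_le {K : ℝ} (hK : 0 ≤ K) (hf : ∀ x, 0 ≤ x → x < L → |f x| ≤ K)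
    (hy : L ≤ y) :
    |R.defect ((Set.Ici L).indicator f) y - R.defect f y| ≤ K * R.tail (y - L) := by
  have hge : ∀ x, L ≤ x → (Set.Ici L).indicator f x = f x := fun x hx =>
    Set.indicator_of_mem (Set.mem_Ici.2 hx) f
  have hlt : ∀ x, x < L → (Set.Ici L).indicator f x = 0 := fun x hx =>
    Set.indicator_of_notMem (Set.notMem_Ici.2 hx) f
  have hle := R.conv_le_conv_add_mul_tail hK (fun x hx => (hge x hx).le)
    (fun x hx hx' => by linarith [hlt x hx', neg_abs_le (f x), hf x hx hx']) y
  have hle' := R.conv_le_conv_add_mul_tail hK (fun x hx => (hge x hx).ge)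
    (fun x hx hx' => by linarith [hlt x hx', le_abs_self (f x), hf x hx hx']) y
  rw [defect_apply, defect_apply, hge y hy, abs_le]
  constructor <;> linarith

end Truncation

lemma conv_indicator_Ici {L : ℝ} (hL : 0 ≤ L) (w : ι → ℝ) (f : ℝ → ℝ) (y : ℝ) :
    R.conv w ((Set.Ici L).indicator f) y = ∑ i ∈ R.upTo (y - L), w i * f (y - R.step i) := by
  rw [conv_apply, ← Finset.sum_subset (R.upTo_mono (sub_le_self y hL))]
  · refine Finset.sum_congr rfl fun i hi => ?_
    rw [Set.indicator_of_mem (Set.mem_Ici.2 (by linarith [R.mem_upTo.1 hi]))]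
  · intro i _ hi
    rw [mem_upTo, not_le] at hi
    rw [Set.indicator_of_notMem (Set.notMem_Ici.2 (by linarith)), mul_zero]

/-- A bounded nonnegative function whose defect dominates `exp (-rate * (y - L))` from `L` on. -/
structure IsExpPotential (R : StepLaw ι) (B L : ℝ) (V : ℝ → ℝ) : Prop where
  nonneg : ∀ y, 0 ≤ V y
  le : ∀ y, V y ≤ B
  exp_le_defect : ∀ y, L ≤ y → Real.exp (-R.rate * (y - L)) ≤ R.defect V y

lemma exp_neg_rate_mul_le_one {x : ℝ} (hx : 0 ≤ x) : Real.exp (-R.rate * x) ≤ 1 :=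
  Real.exp_le_one_iff.2 (by nlinarith [R.rate_pos])

lemma tendsto_mul_exp_neg_rate (C : ℝ) :
    Tendsto (fun x => C * Real.exp (-R.rate * x)) atTop (nhds 0) := by
  rw [← mul_zero C]
  refine (Real.tendsto_exp_atBot.comp ?_).const_mul _
  exact tendsto_id.const_mul_atTop_of_neg (neg_neg_of_pos R.rate_pos)

lemma eventually_mul_exp_neg_rate_le (C : ℝ) {ε : ℝ} (hε : 0 < ε) :
    ∀ᶠ x in atTop, C * Real.exp (-R.rate * x) ≤ ε :=
  (R.tendsto_mul_exp_neg_rate C).eventually_le_const hε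

lemma defect_indicator_sub_exp {L y : ℝ} (hL : 0 ≤ L) (hy : L ≤ y) (B C : ℝ) :
    R.defect ((Set.Ici L).indicator fun x => B - C * Real.exp (-R.rate * (x - L))) y
      = B * R.tail (y - L) + C * Real.exp (-R.rate * (y - L)) *
        (∑ i ∈ R.upTo (y - L), R.prob i * Real.exp (R.rate * R.step i) - 1) := by
  have hshift : ∀ i, Real.exp (-R.rate * (y - R.step i - L))
      = Real.exp (-R.rate * (y - L)) * Real.exp (R.rate * R.step i) := fun i => by
    rw [← Real.exp_add]
    ring_nf
  have hsum : ∑ i ∈ R.upTo (y - L), R.prob i * (B - C * Real.exp (-R.rate * (y - R.step i - L)))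
      = B * (1 - R.tail (y - L)) - C * Real.exp (-R.rate * (y - L)) *
        ∑ i ∈ R.upTo (y - L), R.prob i * Real.exp (R.rate * R.step i) := by
    rw [← sum_prob_upTo, Finset.mul_sum, Finset.mul_sum, ← Finset.sum_sub_distrib]
    exact Finset.sum_congr rfl fun i _ => by rw [hshift]; ring
  rw [defect_apply, R.conv_indicator_Ici hL, hsum, Set.indicator_of_mem (Set.mem_Ici.2 hy)]
  ring

lemma one_sub_tail_le_sum_prob_mul_exp (x : ℝ) :
    1 - R.tail x ≤ ∑ i ∈ R.upTo x, R.prob i * Real.exp (R.rate * R.step i) := by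
  rw [← sum_prob_upTo]
  exact Finset.sum_le_sum fun i _ => le_mul_of_one_le_right (R.prob_pos i).le
    (Real.one_le_exp (mul_pos R.rate_pos (R.step_pos i)).le)

lemma one_sub_tail_add_le_sum_prob_mul_exp {x : ℝ} {a : ι} (ha : R.step a ≤ x) :
    1 - R.tail x + R.prob a * (Real.exp (R.rate * R.step a) - 1)
      ≤ ∑ i ∈ R.upTo x, R.prob i * Real.exp (R.rate * R.step i) := by
  have h := Finset.single_le_sum (f := fun i => R.prob i * (Real.exp (R.rate * R.step i) - 1))
    (fun i _ => mul_nonneg (R.prob_pos i).le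
      (sub_nonneg.2 (Real.one_le_exp (mul_pos R.rate_pos (R.step_pos i)).le))) (R.mem_upTo.2 ha)
  simp only [mul_sub, mul_one, Finset.sum_sub_distrib, sum_prob_upTo] at h ⊢
  linarith

/-- If a fixed jump `a` fits into `[0, y - L]`, it makes the exponential strictly subharmonic at
`y`; otherwise the tail is at least `prob a` and the constant part of the potential suffices. -/
theorem exists_isExpPotential : ∃ B, 0 ≤ B ∧ ∀ L, 0 ≤ L → ∃ V, R.IsExpPotential B L V := by
  obtain ⟨a⟩ := R.nonempty
  have hp := R.prob_pos a
  obtain ⟨gain, hgain, hgain_pos⟩ :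
      ∃ g, g = R.prob a * (Real.exp (R.rate * R.step a) - 1) ∧ 0 < g :=
    ⟨_, rfl, mul_pos hp (sub_pos.2 (Real.one_lt_exp_iff.2 (mul_pos R.rate_pos (R.step_pos a))))⟩
  refine ⟨1 / gain + 1 / R.prob a, by positivity, fun L hL => ⟨(Set.Ici L).indicator fun x =>
    1 / gain + 1 / R.prob a - 1 / gain * Real.exp (-R.rate * (x - L)), ?_, ?_, fun y hy => ?_⟩⟩
  · refine Set.indicator_nonneg fun x hx => ?_
    have hle := mul_le_of_le_one_right (one_div_nonneg.2 hgain_pos.le)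
      (R.exp_neg_rate_mul_le_one (sub_nonneg.2 (Set.mem_Ici.1 hx)))
    linarith [one_div_pos.2 hp]
  · exact Set.indicator_le' (fun x _ => sub_le_self _ (by positivity)) fun x _ => by positivity
  rw [R.defect_indicator_sub_exp hL hy]
  have hle_one := R.exp_neg_rate_mul_le_one (sub_nonneg.2 hy)
  have htail := R.tail_nonneg (y - L)
  set E := Real.exp (-R.rate * (y - L))
  have hE : 0 ≤ E := (Real.exp_pos _).le
  have hconst : 1 / gain * (E * R.tail (y - L)) ≤ 1 / gain * R.tail (y - L) :=
    mul_le_mul_of_nonneg_left (mul_le_of_le_one_left htail hle_one) (by positivity)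
  rcases le_or_gt (R.step a) (y - L) with ha | ha
  · have hsum := R.one_sub_tail_add_le_sum_prob_mul_exp ha
    rw [← hgain] at hsum
    have hmul := mul_le_mul_of_nonneg_left hsum (mul_nonneg (one_div_nonneg.2 hgain_pos.le) hE)
    have hcancel : 1 / gain * E * gain = E := by field_simp
    nlinarith [mul_nonneg (one_div_nonneg.2 hp.le) htail]
  · have hmul := mul_le_mul_of_nonneg_left (R.one_sub_tail_le_sum_prob_mul_exp (y - L))
      (mul_nonneg (one_div_nonneg.2 hgain_pos.le) hE)
    have hbig : 1 ≤ 1 / R.prob a * R.tail (y - L) := by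
      rw [one_div_mul_eq_div]
      exact (one_le_div hp).2 (R.prob_le_tail ha)
    nlinarith

section ChoquetDeny

variable {R} {u F : ℝ → ℝ} {K s : ℝ}

lemma prob_mul_sub_le {m L y : ℝ} (hm : 0 ≤ m) (hK : 0 ≤ K) (hle : ∀ x, L ≤ x → u x ≤ m)
    (hu : ∀ x, u x ≤ m + K) {a : ι} (ha : R.step a ≤ y) :
    R.prob a * (m - u (y - R.step a)) ≤ m - R.conv R.prob u y + K * R.tail (y - L) := by
  have hpos := R.prob_mul_le_conv (f := fun x => max (m - u x) 0) (fun x _ => le_max_right _ _) ha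
  have hcut := R.conv_le_conv_add_mul_tail (f := fun x => max (m - u x) 0)
    (g := (fun _ => m) - u) hK (fun x hx => max_le le_rfl (sub_nonneg.2 (hle x hx)))
    (fun x _ _ => max_le (le_add_of_nonneg_right hK)
      (by rw [Pi.sub_apply]; linarith [hu x])) y
  have hconst := R.defect_const m y
  rw [defect_apply] at hconst
  rw [map_sub, Pi.sub_apply] at hcut
  have hmul := mul_le_mul_of_nonneg_left (le_max_left (m - u (y - R.step a)) 0) (R.prob_pos a).le
  linarith [mul_nonneg hm (R.tail_nonneg y)]

lemma tendsto_tail : Tendsto R.tail atTop (nhds 0) :=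
  squeeze_zero R.tail_nonneg R.tail_le (R.tendsto_mul_exp_neg_rate _)

lemma eventually_atTop_sub {p : ℝ → Prop} (hp : ∀ᶠ y in atTop, p y) (t : ℝ) :
    ∀ᶠ y in atTop, p (y - t) :=
  (tendsto_atTop_add_const_right atTop (-t) tendsto_id).eventually hp

/-- Near-maximal values propagate backwards along every jump, since `u` is nearly an average of its
values at `y - step i`. -/
lemma eventually_lt_sub_step (hs : 0 ≤ s) (hK : ∀ x, u x ≤ K)
    (hlim : ∀ η > 0, ∀ᶠ y in atTop, u y < s + η) (hdef : Tendsto (R.defect u) atTop (nhds 0))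
    (a : ι) {η : ℝ} (hη : 0 < η) :
    ∃ η' > 0, ∀ᶠ y in atTop, s - η' < u y → s - η < u (y - R.step a) := by
  have hp := R.prob_pos a
  have hη' : 0 < R.prob a * η / 4 := by positivity
  refine ⟨R.prob a * η / 4, hη', ?_⟩
  obtain ⟨L, hL⟩ := eventually_atTop.1 (hlim _ hη')
  have htail : ∀ᶠ y in atTop, max K 0 * R.tail (y - L) < R.prob a * η / 4 := by
    have h := R.tendsto_tail.const_mul (max K 0)
    rw [mul_zero] at h
    exact eventually_atTop_sub (h.eventually_lt_const hη') L
  filter_upwards [htail, eventually_ge_atTop (R.step a), hdef.eventually_lt_const hη']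
    with y htail hy hdef hlt
  have hprop := prob_mul_sub_le (add_nonneg hs hη'.le) (le_max_right K 0) (fun x hx => (hL x hx).le)
    (fun x => by linarith [hK x, le_max_left K 0]) hy
  rw [defect_apply] at hdef
  by_contra! hcon
  have := mul_le_mul_of_nonneg_left hcon hp.le
  nlinarith

lemma eventually_lt_sub_nsmul_step (hs : 0 ≤ s) (hK : ∀ x, u x ≤ K)
    (hlim : ∀ η > 0, ∀ᶠ y in atTop, u y < s + η) (hdef : Tendsto (R.defect u) atTop (nhds 0))
    (a : ι) (k : ℕ) : ∀ η > 0,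
    ∃ η' > 0, ∀ᶠ y in atTop, s - η' < u y → ∀ j ≤ k, s - η < u (y - j * R.step a) := by
  induction k with
  | zero => exact fun η hη => ⟨η, hη, Eventually.of_forall fun y hy j hj => by
      simpa [Nat.le_zero.1 hj] using hy⟩
  | succ k ih =>
    intro η hη
    obtain ⟨η₁, hη₁, hone⟩ := eventually_lt_sub_step hs hK hlim hdef a hη
    obtain ⟨η₂, hη₂, hmany⟩ := ih (min η η₁) (lt_min hη hη₁)
    refine ⟨η₂, hη₂, ?_⟩
    filter_upwards [hmany, eventually_atTop_sub hone (k * R.step a)] with y hmany hone hy j hj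
    rcases hj.lt_or_eq with hj | rfl
    · linarith [hmany hy j (Nat.lt_succ_iff.1 hj), min_le_left η η₁]
    · have := hone (by linarith [hmany hy k le_rfl, min_le_right η η₁])
      push_cast
      rwa [add_mul, one_mul, ← sub_sub]

lemma tendsto_defect_sub_comp_sub (hF : ∀ x < 0, F x = 0)
    (hdef : Tendsto (R.defect F) atTop (nhds 0)) {t : ℝ} (ht : 0 ≤ t) :
    Tendsto (R.defect fun y => F y - F (y - t)) atTop (nhds 0) := by
  have hshift : R.defect (fun y => F y - F (y - t))
      = fun y => R.defect F y - R.defect F (y - t) := by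
    ext y
    rw [← R.defect_comp_sub hF ht y, ← Pi.sub_apply, ← map_sub]
    rfl
  rw [hshift, ← sub_zero (0 : ℝ)]
  exact hdef.sub (hdef.comp (tendsto_atTop_add_const_right atTop (-t) tendsto_id))

/-- A positive limit superior of `F y - F (y - step a)` would be attained, up to `η`, along
arbitrarily long strings of jumps `a`, along which `F` would drift beyond its bounds. -/
lemma eventually_sub_sub_step_lt {K : ℝ} (hF : ∀ x < 0, F x = 0) (hK : ∀ x, |F x| ≤ K)
    (hdef : Tendsto (R.defect F) atTop (nhds 0)) (a : ι) {ε : ℝ} (hε : 0 < ε) :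
    ∀ᶠ y in atTop, F y - F (y - R.step a) < ε := by
  by_contra hcon
  simp only [not_eventually, not_lt] at hcon
  have hu : ∀ y, |F y - F (y - R.step a)| ≤ 2 * K := fun y =>
    (abs_sub _ _).trans (by linarith [hK y, hK (y - R.step a)])
  have hbdd : IsBoundedUnder (· ≤ ·) atTop fun y => F y - F (y - R.step a) :=
    isBoundedUnder_of ⟨_, fun y => (le_abs_self _).trans (hu y)⟩
  have hcobdd : IsCoboundedUnder (· ≤ ·) atTop fun y => F y - F (y - R.step a) :=
    IsBoundedUnder.isCoboundedUnder_le (isBoundedUnder_of ⟨_, fun y => (abs_le.1 (hu y)).1⟩)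
  obtain ⟨s, hs⟩ : ∃ s, s = limsup (fun y => F y - F (y - R.step a)) atTop := ⟨_, rfl⟩
  have hs_pos : 0 < s := hε.trans_le (hs ▸ le_limsup_of_frequently_le hcon hbdd)
  obtain ⟨k, hk⟩ := exists_nat_gt (4 * K / s)
  obtain ⟨η, hη, hrun⟩ := eventually_lt_sub_nsmul_step hs_pos.le
    (fun y => (le_abs_self _).trans (hu y))
    (fun η hη => eventually_lt_of_limsup_lt (by rw [← hs]; linarith) hbdd)
    (tendsto_defect_sub_comp_sub hF hdef (R.step_pos a).le) a k (s / 2)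
    (half_pos hs_pos)
  obtain ⟨y, hy, hrun⟩ :=
    ((frequently_lt_of_lt_limsup hcobdd (b := s - η) (by linarith)).and_eventually hrun).exists
  have htelescope : ∑ j ∈ Finset.range k, (F (y - j * R.step a) - F (y - j * R.step a - R.step a))
      = F y - F (y - k * R.step a) := by
    convert Finset.sum_range_sub' (fun j : ℕ => F (y - j * R.step a)) k using 3 with j
    · push_cast; ring_nf
    · simp
  have hdrift : k * (s / 2) ≤ F y - F (y - k * R.step a) := by
    rw [← htelescope, ← nsmul_eq_mul, ← Finset.card_range k, ← Finset.sum_const, Finset.card_range]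
    exact Finset.sum_le_sum fun j hj => by linarith [hrun hy j (Finset.mem_range.1 hj).le]
  rw [div_lt_iff₀ hs_pos] at hk
  linarith [abs_le.1 (hK y), abs_le.1 (hK (y - k * R.step a))]

theorem tendsto_sub_sub_step {K : ℝ} (hF : ∀ x < 0, F x = 0) (hK : ∀ x, |F x| ≤ K)
    (hdef : Tendsto (R.defect F) atTop (nhds 0)) (a : ι) :
    Tendsto (fun y => F y - F (y - R.step a)) atTop (nhds 0) := by
  refine tendsto_order.2 ⟨fun ε hε => ?_, fun ε hε => eventually_sub_sub_step_lt hF hK hdef a hε⟩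
  have hneg := eventually_sub_sub_step_lt (F := -F) (fun x hx => by simp [hF x hx])
    (fun x => by simpa using hK x) (by rw [map_neg, ← neg_zero]; exact hdef.neg) a
    (neg_pos.2 hε)
  filter_upwards [hneg] with y hy
  simp only [Pi.neg_apply] at hy
  linarith

end ChoquetDeny

/-- The group of reals generated by the jumps. -/
def jumpGroup : AddSubgroup ℝ := AddSubgroup.closure (Set.range R.step)

lemma step_mem_jumpGroup (i : ι) : R.step i ∈ R.jumpGroup :=
  AddSubgroup.subset_closure (Set.mem_range_self i)

lemma isStepClosed_coset (t : ℝ) : R.IsStepClosed {y | 0 ≤ y ∧ y - t ∈ R.jumpGroup} :=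
  ⟨fun _ hy => hy.1, fun y hy i hi =>
    ⟨sub_nonneg.2 hi, sub_right_comm y (R.step i) t ▸ sub_mem hy.2 (R.step_mem_jumpGroup i)⟩⟩

variable {R} in
theorem tendsto_add_sub_of_mem_jumpGroup {F : ℝ → ℝ} {K : ℝ} (hF : ∀ x < 0, F x = 0)
    (hK : ∀ x, |F x| ≤ K) (hdef : Tendsto (R.defect F) atTop (nhds 0)) {g : ℝ}
    (hg : g ∈ R.jumpGroup) : Tendsto (fun y => F (y + g) - F y) atTop (nhds 0) := by
  induction hg using AddSubgroup.closure_induction with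
  | mem g hg =>
    obtain ⟨a, rfl⟩ := hg
    refine ((tendsto_sub_sub_step hF hK hdef a).comp
      (tendsto_atTop_add_const_right atTop (R.step a) tendsto_id)).congr fun y => ?_
    simp only [Function.comp_apply, id_eq, add_sub_cancel_right]
  | zero => simp
  | add g g' _ _ hg hg' =>
    rw [← add_zero (0 : ℝ)]
    refine ((hg'.comp (tendsto_atTop_add_const_right atTop g tendsto_id)).add hg).congr fun y => ?_
    simp only [Function.comp_apply, id_eq, ← add_assoc, sub_add_sub_cancel]
  | neg g _ hg =>
    rw [← neg_zero]
    refine ((hg.comp (tendsto_atTop_add_const_right atTop (-g) tendsto_id)).neg).congr fun y => ?_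
    simp only [Function.comp_apply, id_eq, neg_add_cancel_right, neg_sub]

lemma exists_pos_mem_fract_mul_le {G : AddSubgroup ℝ} (hG : ∃ g ∈ G, g ≠ 0) {η : ℝ} (hη : 0 < η) :
    ∃ d ∈ G, 0 < d ∧ ∀ g ∈ G, Int.fract (g / d) * d ≤ η := by
  rcases AddSubgroup.dense_or_cyclic G with hdense | ⟨d, rfl⟩
  · obtain ⟨d, hdG, hd, hdη⟩ := hdense.exists_between hη
    exact ⟨d, hdG, hd, fun g _ =>
      (mul_le_of_le_one_left hd.le (Int.fract_lt_one _).le).trans hdη.le⟩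
  · obtain ⟨g₀, hg₀, hne⟩ := hG
    have hd : d ≠ 0 := by
      rintro rfl
      rw [AddSubgroup.closure_singleton_zero, AddSubgroup.mem_bot] at hg₀
      exact hne hg₀
    refine ⟨|d|, ?_, abs_pos.2 hd, fun g hg => ?_⟩
    · rcases abs_choice d with h | h <;> rw [h]
      · exact AddSubgroup.subset_closure rfl
      · exact neg_mem (AddSubgroup.subset_closure rfl)
    · obtain ⟨n, rfl⟩ := AddSubgroup.mem_closure_singleton.1 hg
      have hfract : Int.fract (n • d / |d|) = 0 := by
        rcases abs_choice d with h | h <;> rw [h, zsmul_eq_mul]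
        · rw [mul_div_cancel_right₀ _ hd, Int.fract_intCast]
        · rw [div_neg, mul_div_cancel_right₀ _ hd, ← Int.cast_neg, Int.fract_intCast]
      rw [hfract, zero_mul]
      exact hη.le

lemma exists_finset_le_le_add {G : AddSubgroup ℝ} (hG : ∃ g ∈ G, g ≠ 0) (A : ℝ) {η : ℝ}
    (hη : 0 < η) :
    ∃ s : Finset ℝ, (∀ x ∈ s, x ∈ G) ∧ ∀ g ∈ G, |g| ≤ A → ∃ x ∈ s, x ≤ g ∧ g ≤ x + η := by
  classical
  obtain ⟨d, hdG, hd, hfract⟩ := exists_pos_mem_fract_mul_le hG hη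
  refine ⟨(Finset.Icc ⌊-(A / d)⌋ ⌊A / d⌋).image fun n : ℤ => n * d, fun x hx => ?_,
    fun g hg hgA => ⟨⌊g / d⌋ * d, Finset.mem_image_of_mem _ (Finset.mem_Icc.2 ?_), ?_⟩⟩
  · obtain ⟨n, _, rfl⟩ := Finset.mem_image.1 hx
    exact zsmul_eq_mul d n ▸ zsmul_mem hdG n
  · have hgd : |g / d| ≤ A / d := by
      rw [abs_div, abs_of_pos hd]
      exact div_le_div_of_nonneg_right hgA hd.le
    exact ⟨Int.floor_mono (abs_le.1 hgd).1, Int.floor_mono (abs_le.1 hgd).2⟩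
  · have hsplit : ⌊g / d⌋ * d + Int.fract (g / d) * d = g := by
      rw [← add_mul, Int.floor_add_fract, div_mul_cancel₀ _ hd.ne']
    have hfract_nonneg := mul_nonneg (Int.fract_nonneg (g / d)) hd.le
    constructor <;> linarith [hfract g hg]

/-- The normalized solutions of the renewal equation with source `exp (-ρ * y)`; `exp_mul_le` says
that `exp (ρ * y) * h y` is nondecreasing. -/
structure IsRenewalDensity (R : StepLaw ι) (ρ : ℝ) (h : ℝ → ℝ) : Prop where
  rate_lt : R.rate < ρ
  eq_zero_of_neg : ∀ y < 0, h y = 0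
  nonneg : ∀ y, 0 ≤ h y
  exp_mul_le : ∀ y t, 0 ≤ t → Real.exp (-ρ * t) * h y ≤ h (y + t)
  defect_eq : ∀ y, 0 ≤ y → R.defect h y = Real.exp (-ρ * y)

namespace IsRenewalDensity

variable {R} {ρ B ε : ℝ} {h : ℝ → ℝ} (H : R.IsRenewalDensity ρ h)
include H

lemma abs_defect_le {y : ℝ} (hy : 0 ≤ y) : |R.defect h y| ≤ Real.exp (-R.rate * y) := by
  rw [H.defect_eq y hy, abs_of_pos (Real.exp_pos _), Real.exp_le_exp]
  exact mul_le_mul_of_nonneg_right (neg_le_neg H.rate_lt.le) hy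

lemma exp_le {y : ℝ} (hy : 0 ≤ y) : Real.exp (-ρ * y) ≤ h y := by
  rw [← H.defect_eq y hy, defect_apply]
  exact sub_le_self _ (R.conv_nonneg fun x _ => H.nonneg x)

theorem exists_le : ∃ B, 0 ≤ B ∧ ∀ y, h y ≤ B := by
  obtain ⟨B, hB, hV⟩ := R.exists_isExpPotential
  obtain ⟨V, hV⟩ := hV 0 le_rfl
  refine ⟨B, hB, fun y => ?_⟩
  rcases lt_or_ge y 0 with hy | hy
  · rwa [H.eq_zero_of_neg y hy]
  · refine (le_of_defect_le R.isStepClosed_Ici (fun x hx => Or.inr ?_) y hy).trans (hV.le y)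
    have hexp := hV.exp_le_defect x hx
    rw [sub_zero] at hexp
    exact (le_abs_self _).trans ((H.abs_defect_le hx).trans hexp)

theorem exists_pos_le : ∃ b, 0 < b ∧ ∀ y, 0 ≤ y → b ≤ h y := by
  obtain ⟨B, _, hpot⟩ := R.exists_isExpPotential
  obtain ⟨L, hL, hsmall⟩ := ((R.eventually_mul_exp_neg_rate_le (R.expMoment * B)
    one_half_pos).and (eventually_ge_atTop 0)).exists.imp fun _ => And.symm
  obtain ⟨V, hV⟩ := hpot L hL
  obtain ⟨A, hA⟩ : ∃ A, A = R.expMoment * Real.exp (-R.rate * L) := ⟨_, rfl⟩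
  have hA_nonneg : 0 ≤ A := hA ▸ mul_nonneg R.expMoment_nonneg (Real.exp_pos _).le
  refine ⟨Real.exp (-ρ * L) * (1 / 2), by positivity, fun y hy => ?_⟩
  have hcomp : ∀ y ∈ Set.Ici (0 : ℝ),
      (Real.exp (-ρ * L) • ((fun _ => 1) - A • V) : ℝ → ℝ) y ≤ h y := by
    refine le_of_defect_le R.isStepClosed_Ici fun x hx => ?_
    rcases lt_or_ge x L with hxL | hxL
    · left
      refine (mul_le_of_le_one_right (Real.exp_pos _).le (sub_le_self _
        (mul_nonneg hA_nonneg (hV.nonneg x)))).trans (le_trans ?_ (H.exp_le hx))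
      exact Real.exp_le_exp.2 (by nlinarith [H.rate_lt, R.rate_pos])
    · right
      have htail := R.tail_add_le L (x - L)
      rw [add_sub_cancel, ← hA] at htail
      have hV' := mul_le_mul_of_nonneg_left (hV.exp_le_defect x hxL) hA_nonneg
      rw [H.defect_eq x hx, map_smul, map_sub, map_smul, Pi.smul_apply, Pi.sub_apply,
        R.defect_const, Pi.smul_apply, smul_eq_mul, smul_eq_mul]
      exact (mul_nonpos_of_nonneg_of_nonpos (Real.exp_pos _).le (by linarith)).trans
        (Real.exp_pos _).le
  refine le_trans (mul_le_mul_of_nonneg_left ?_ (Real.exp_pos _).le) (hcomp y hy)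
  have := mul_le_mul_of_nonneg_left (hV.le y) hA_nonneg
  have hAB : A * B ≤ 1 / 2 := by rwa [hA, mul_right_comm]
  simp only [Pi.sub_apply, Pi.smul_apply, smul_eq_mul]
  linarith

lemma abs_le_bound (hB : ∀ y, h y ≤ B) (y : ℝ) : |h y| ≤ B :=
  (abs_of_nonneg (H.nonneg y)).trans_le (hB y)

lemma tendsto_defect : Tendsto (R.defect h) atTop (nhds 0) := by
  refine squeeze_zero_norm' ?_ (R.tendsto_mul_exp_neg_rate 1)
  simp only [one_mul]
  filter_upwards [eventually_ge_atTop 0] with y hy using H.abs_defect_le hy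

lemma sub_mul_le {x x' η : ℝ} (hB : ∀ y, h y ≤ B) (hx : x ≤ x') (hx' : x' ≤ x + η) :
    h x - ρ * η * B ≤ h x' := by
  have hgrow := H.exp_mul_le x (x' - x) (sub_nonneg.2 hx)
  rw [add_sub_cancel] at hgrow
  have hρ : 0 < ρ := R.rate_pos.trans H.rate_lt
  have hexp : 1 - ρ * η ≤ Real.exp (-ρ * (x' - x)) := by
    nlinarith [Real.add_one_le_exp (-ρ * (x' - x))]
  have hη : 0 ≤ ρ * η := mul_nonneg hρ.le (by linarith)
  nlinarith [mul_le_mul_of_nonneg_right hexp (H.nonneg x), mul_le_mul_of_nonneg_left (hB x) hη]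

/-- Every `g` lies within `η` above, and within `η` below, one of finitely many group elements, and
`h` cannot decrease by more than `ρ * η * B` over a distance `η`. -/
theorem eventually_abs_add_sub_le (A : ℝ) (hε : 0 < ε) :
    ∀ᶠ t in atTop, ∀ g ∈ R.jumpGroup, |g| ≤ A → |h (t + g) - h t| ≤ ε := by
  obtain ⟨B, hB₀, hB⟩ := H.exists_le
  have hρ : 0 < ρ := R.rate_pos.trans H.rate_lt
  obtain ⟨η, hη, hηB⟩ : ∃ η > 0, ρ * η * B ≤ ε / 2 := by
    refine ⟨ε / (2 * ρ * (B + 1)), by positivity, ?_⟩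
    rw [mul_div_assoc', div_mul_eq_mul_div, div_le_div_iff₀ (by positivity) two_pos]
    nlinarith [mul_pos hρ hε]
  obtain ⟨a⟩ := R.nonempty
  obtain ⟨s, hsG, hs⟩ := exists_finset_le_le_add
    ⟨R.step a, R.step_mem_jumpGroup a, (R.step_pos a).ne'⟩ A hη
  have hclose : ∀ x ∈ R.jumpGroup, ∀ᶠ t in atTop, |h (t + x) - h t| ≤ ε / 2 := fun x hx => by
    have hlim := (tendsto_add_sub_of_mem_jumpGroup H.eq_zero_of_neg (H.abs_le_bound hB)
      H.tendsto_defect hx).abs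
    rw [abs_zero] at hlim
    exact hlim.eventually_le_const (half_pos hε)
  have hnet : ∀ᶠ t in atTop, ∀ x ∈ s, |h (t + x) - h t| ≤ ε / 2 ∧ |h (t + -x) - h t| ≤ ε / 2 :=
    (Filter.eventually_all_finset s).2 fun x hx =>
      (hclose x (hsG x hx)).and (hclose (-x) (neg_mem (hsG x hx)))
  filter_upwards [hnet] with t hnet g hg hgA
  obtain ⟨x, hx, hxg, hgx⟩ := hs g hg hgA
  obtain ⟨x', hx', hxg', hgx'⟩ := hs (-g) (neg_mem hg) ((abs_neg g).trans_le hgA)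
  have hbelow := H.sub_mul_le hB (x := t + x) (x' := t + g) (η := η) (by linarith) (by linarith)
  have habove := H.sub_mul_le hB (x := t + g) (x' := t + -x') (η := η) (by linarith) (by linarith)
  rw [abs_sub_le_iff]
  constructor <;> linarith [abs_sub_le_iff.1 (hnet x hx).1, abs_sub_le_iff.1 (hnet x' hx').2]

lemma abs_defect_indicator_sub_const_le {A t y : ℝ} (hB : ∀ y, h y ≤ B) (hA : A ≤ t)
    (hA₀ : 0 ≤ A) (hy : t ≤ y) :
    |R.defect ((Set.Ici (t - A)).indicator (h - fun _ => h t)) y|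
      ≤ (1 + 2 * B * R.expMoment) * Real.exp (-R.rate * A) * Real.exp (-R.rate * (y - t)) := by
  have hB₀ : 0 ≤ B := (H.nonneg 0).trans (hB 0)
  have hcut := abs_defect_indicator_Ici_sub_le (R := R) (f := h - fun _ => h t) hB₀
    (fun x _ _ => abs_sub_le_of_nonneg_of_le (H.nonneg x) (hB x) (H.nonneg t) (hB t))
    (L := t - A) (y := y) (by linarith)
  have hdecay : Real.exp (-R.rate * y) ≤ Real.exp (-R.rate * A) * Real.exp (-R.rate * (y - t)) := by
    rw [← Real.exp_add, Real.exp_le_exp]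
    nlinarith [R.rate_pos]
  have htail := R.tail_add_le A (y - t)
  rw [show A + (y - t) = y - (t - A) by ring] at htail
  have htail' : R.tail y ≤ R.expMoment * (Real.exp (-R.rate * A) * Real.exp (-R.rate * (y - t))) :=
    (R.tail_le y).trans (mul_le_mul_of_nonneg_left hdecay R.expMoment_nonneg)
  have hdef := H.abs_defect_le (y := y) (by linarith)
  rw [map_sub, Pi.sub_apply, R.defect_const] at hcut
  have hconst : |h t * R.tail y| ≤ B * R.tail y := by
    rw [abs_of_nonneg (mul_nonneg (H.nonneg t) (R.tail_nonneg y))]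
    exact mul_le_mul_of_nonneg_right (hB t) (R.tail_nonneg y)
  have hBtail := mul_le_mul_of_nonneg_left htail hB₀
  have hBtail' := mul_le_mul_of_nonneg_left htail' hB₀
  have htriangle := abs_sub_abs_le_abs_sub
    (R.defect ((Set.Ici (t - A)).indicator (h - fun _ => h t)) y) (R.defect h y - h t * R.tail y)
  linarith [abs_sub (R.defect h y) (h t * R.tail y)]

theorem eventually_abs_add_sub_le_of_nonneg (hε : 0 < ε) :
    ∀ᶠ t in atTop, ∀ g ∈ R.jumpGroup, 0 ≤ g → |h (t + g) - h t| ≤ ε := by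
  obtain ⟨B, hB₀, hB⟩ := H.exists_le
  obtain ⟨K, _, hpot⟩ := R.exists_isExpPotential
  obtain ⟨A, hsmall, hA⟩ := ((R.eventually_mul_exp_neg_rate_le ((1 + 2 * B * R.expMoment) * K)
    (half_pos hε)).and (eventually_ge_atTop 0)).exists
  filter_upwards [H.eventually_abs_add_sub_le A (half_pos hε), eventually_ge_atTop A]
    with t hslow ht g hg hg₀
  obtain ⟨V, hV⟩ := hpot t (hA.trans ht)
  obtain ⟨D, hD⟩ : ∃ D, D = (1 + 2 * B * R.expMoment) * Real.exp (-R.rate * A) := ⟨_, rfl⟩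
  have hD₀ : 0 ≤ D := by
    have := R.expMoment_nonneg
    rw [hD]
    positivity
  have hcomp := abs_le_of_abs_defect_le (R.isStepClosed_coset t)
    (f := (Set.Ici (t - A)).indicator (h - fun _ => h t)) (V := (fun _ => ε / 2) + D • V)
    fun y hy => ?_
  · have hmem : t + g ∈ Set.Ici (t - A) := by simp only [Set.mem_Ici]; linarith
    have hle := hcomp (t + g) ⟨by linarith, by simpa using hg⟩
    rw [Set.indicator_of_mem hmem, Pi.sub_apply, Pi.add_apply, Pi.smul_apply, smul_eq_mul] at hle
    have hDV := mul_le_mul_of_nonneg_left (hV.le (t + g)) hD₀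
    have hDK : D * K ≤ ε / 2 := by rwa [hD, mul_right_comm]
    linarith
  · rcases le_or_gt t y with hty | hty
    · right
      refine (H.abs_defect_indicator_sub_const_le hB ht hA hty).trans ?_
      rw [← hD, map_add, map_smul, Pi.add_apply, R.defect_const, Pi.smul_apply, smul_eq_mul]
      exact (mul_le_mul_of_nonneg_left (hV.exp_le_defect y hty) hD₀).trans
        (le_add_of_nonneg_left (mul_nonneg (half_pos hε).le (R.tail_nonneg y)))
    · left
      refine le_trans ?_ (le_add_of_nonneg_right (mul_nonneg hD₀ (hV.nonneg y)))
      by_cases hyA : y ∈ Set.Ici (t - A)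
      · rw [Set.indicator_of_mem hyA]
        have hclose := hslow (y - t) hy.2
          (abs_le.2 ⟨by linarith [Set.mem_Ici.1 hyA], by linarith⟩)
        rwa [add_sub_cancel] at hclose
      · rw [Set.indicator_of_notMem hyA, abs_zero]
        exact (half_pos hε).le

/-- `c y` is the limit of `h` along the coset `y + jumpGroup`. -/
theorem exists_periodic_tendsto_sub (hB : ∀ y, h y ≤ B) :
    ∃ c : ℝ → ℝ, (∀ y i, c (y - R.step i) = c y) ∧ (∀ y, 0 ≤ c y ∧ c y ≤ B) ∧
      Tendsto (h - c) atTop (nhds 0) := by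
  obtain ⟨a⟩ := R.nonempty
  have hshift : ∀ y, Tendsto (fun k : ℕ => y + k * R.step a) atTop atTop := fun y =>
    tendsto_atTop_add_const_left _ _
      (tendsto_natCast_atTop_atTop.atTop_mul_const (R.step_pos a))
  have hmem : ∀ k : ℕ, k * R.step a ∈ R.jumpGroup := fun k =>
    nsmul_eq_mul k (R.step a) ▸ nsmul_mem (R.step_mem_jumpGroup a) k
  have hnonneg : ∀ k : ℕ, 0 ≤ k * R.step a := fun k =>
    mul_nonneg k.cast_nonneg (R.step_pos a).le
  have hconv : ∀ y, ∃ l, Tendsto (fun k : ℕ => h (y + k * R.step a)) atTop (nhds l) := fun y => by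
    refine cauchySeq_tendsto_of_complete (Metric.cauchySeq_iff'.2 fun ε hε => ?_)
    obtain ⟨N, hN⟩ :=
      ((hshift y).eventually (H.eventually_abs_add_sub_le_of_nonneg (half_pos hε))).exists
    refine ⟨N, fun n hn => ?_⟩
    have hclose := hN _ (hmem (n - N)) (hnonneg (n - N))
    rw [Nat.cast_sub hn, add_assoc, ← add_mul, add_sub_cancel] at hclose
    exact hclose.trans_lt (half_lt_self hε)
  choose c hc using hconv
  refine ⟨c, fun y i => ?_, fun y => ?_, Metric.tendsto_atTop.2 fun ε hε => ?_⟩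
  · have hdiff := (tendsto_add_sub_of_mem_jumpGroup H.eq_zero_of_neg (H.abs_le_bound hB)
      H.tendsto_defect (neg_mem (R.step_mem_jumpGroup i))).comp (hshift y)
    refine sub_eq_zero.1 (tendsto_nhds_unique ((hc (y - R.step i)).sub (hc y)) ?_)
    refine hdiff.congr fun k => ?_
    rw [Function.comp_apply, ← sub_eq_add_neg, sub_add_eq_add_sub]
  · exact ⟨ge_of_tendsto' (hc y) fun _ => H.nonneg _, le_of_tendsto' (hc y) fun _ => hB _⟩
  · obtain ⟨T, hT⟩ := eventually_atTop.1 (H.eventually_abs_add_sub_le_of_nonneg (half_pos hε))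
    refine ⟨T, fun t ht => lt_of_le_of_lt ?_ (half_lt_self hε)⟩
    rw [Pi.sub_apply, dist_zero_right, Real.norm_eq_abs, abs_sub_comm]
    exact le_of_tendsto' ((hc t).sub_const (h t)).abs fun k => hT t ht _ (hmem k) (hnonneg k)

end IsRenewalDensity

section LocalVariance

/-- The variance of `f (y - X)`, where `X` is a random jump and `f` is read as `0` on negative
reals. -/
def localVariance (f : ℝ → ℝ) (y : ℝ) : ℝ := R.conv R.prob (f ^ 2) y - R.conv R.prob f y ^ 2

/-- A weight with mean `0` and second moment `v` under the jump distribution. -/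
structure IsCentered (R : StepLaw ι) (ζ : ι → ℝ) (v : ℝ) : Prop where
  hasSum_mul : HasSum (fun i => R.prob i * ζ i) 0
  hasSum_mul_sq : HasSum (fun i => R.prob i * ζ i ^ 2) v

variable {R} {ζ : ι → ℝ} {v : ℝ} {f : ℝ → ℝ}

lemma IsCentered.neg (hζ : R.IsCentered ζ v) : R.IsCentered (-ζ) v :=
  ⟨by simpa using hζ.hasSum_mul.neg, by simpa using hζ.hasSum_mul_sq⟩

lemma IsCentered.nonneg (hζ : R.IsCentered ζ v) : 0 ≤ v :=
  hζ.hasSum_mul_sq.nonneg fun i => mul_nonneg (R.prob_pos i).le (sq_nonneg _)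

lemma IsCentered.conv_le (hζ : R.IsCentered ζ v) (hf : ∀ x < 0, f x = 0) {t : ℝ} (ht : 0 < t)
    (y : ℝ) : R.conv (R.prob * ζ) f y ≤ t * v + R.localVariance f y / (4 * t) := by
  have hf_sq : ∀ x < 0, (f ^ 2) x = 0 := fun x hx => by simp [hf x hx]
  obtain ⟨m, hm⟩ : ∃ m, m = R.conv R.prob f y := ⟨_, rfl⟩
  have hsum := ((hζ.hasSum_mul_sq.mul_left (4 * t ^ 2)).add
    (((R.hasSum_conv hf_sq R.prob y).sub ((R.hasSum_conv hf R.prob y).mul_left (2 * m))).add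
      (R.hasSum_prob.mul_left (m ^ 2)))).sub
    (((R.hasSum_conv hf (R.prob * ζ) y).sub (hζ.hasSum_mul.mul_left m)).mul_left (4 * t))
  have hnonneg := hsum.nonneg fun i => by
    convert mul_nonneg (R.prob_pos i).le (sq_nonneg (2 * t * ζ i - (f (y - R.step i) - m))) using 1
    simp only [Pi.mul_apply, Pi.pow_apply]
    ring
  rw [← sub_le_iff_le_add', le_div_iff₀ (by positivity), localVariance]
  rw [← hm] at hnonneg ⊢
  linarith

/-- Cauchy–Schwarz for the covariance of `ζ` and `f (y - X)`, with the geometric mean of the two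
variances linearized by AM-GM. -/
theorem IsCentered.abs_conv_le (hζ : R.IsCentered ζ v) (hf : ∀ x < 0, f x = 0) {t : ℝ} (ht : 0 < t)
    (y : ℝ) : |R.conv (R.prob * ζ) f y| ≤ t * v + R.localVariance f y / (4 * t) := by
  refine abs_le'.2 ⟨hζ.conv_le hf ht y, ?_⟩
  have hneg : R.conv (R.prob * -ζ) f y = -R.conv (R.prob * ζ) f y := by
    simp only [conv_apply, Pi.mul_apply, Pi.neg_apply, mul_neg, neg_mul, Finset.sum_neg_distrib]
  exact hneg ▸ hζ.neg.conv_le hf ht y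

lemma IsCentered.abs_conv_le_of_abs_le (hζ : R.IsCentered ζ v) {B : ℝ} (hf : ∀ x, |f x| ≤ B)
    (y : ℝ) : |R.conv (R.prob * ζ) f y| ≤ B * (1 + v) := by
  have hB : 0 ≤ B := (abs_nonneg _).trans (hf 0)
  calc |R.conv (R.prob * ζ) f y|
      ≤ ∑ i ∈ R.upTo y, |(R.prob * ζ) i * f (y - R.step i)| := Finset.abs_sum_le_sum_abs _ _
    _ ≤ ∑ i ∈ R.upTo y, B * (R.prob i + R.prob i * ζ i ^ 2) := Finset.sum_le_sum fun i _ => by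
        have hp := R.prob_pos i
        have hζi : |ζ i| ≤ 1 + ζ i ^ 2 := by nlinarith [sq_abs (ζ i), sq_nonneg (|ζ i| - 1)]
        rw [abs_mul, Pi.mul_apply, abs_mul, abs_of_pos hp, mul_comm, ← mul_one_add]
        exact mul_le_mul (hf _) (mul_le_mul_of_nonneg_left hζi hp.le)
          (mul_nonneg hp.le (abs_nonneg _)) hB
    _ ≤ B * (1 + v) := by
        rw [← Finset.mul_sum]
        exact mul_le_mul_of_nonneg_left (sum_le_hasSum _ (fun i _ =>
          add_nonneg (R.prob_pos i).le (mul_nonneg (R.prob_pos i).le (sq_nonneg _)))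
          (R.hasSum_prob.add hζ.hasSum_mul_sq)) hB

variable (R) in
lemma localVariance_eq (f : ℝ → ℝ) (c y : ℝ) :
    R.localVariance f y = R.conv R.prob ((f - fun _ => c) ^ 2) y - (R.conv R.prob f y - c) ^ 2
      + c ^ 2 * R.tail y := by
  have hexpand : (f - fun _ => c) ^ 2 = f ^ 2 - (2 * c) • f + fun _ => c ^ 2 := by
    ext x
    simp only [Pi.pow_apply, Pi.sub_apply, Pi.add_apply, Pi.smul_apply, smul_eq_mul]
    ring
  have hconst := R.defect_const (c ^ 2) y
  rw [defect_apply] at hconst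
  rw [localVariance, hexpand, map_add, map_sub, map_smul, Pi.add_apply, Pi.sub_apply,
    Pi.smul_apply, smul_eq_mul]
  linarith

lemma sq_indicator_Ici_le {L δ : ℝ} (hf : ∀ y, L ≤ y → |f y| ≤ δ) (y : ℝ) :
    (Set.Ici L).indicator f y ^ 2 ≤ δ ^ 2 := by
  by_cases hy : y ∈ Set.Ici L
  · rw [Set.indicator_of_mem hy, sq_le_sq]
    exact (hf y hy).trans (le_abs_self δ)
  · rw [Set.indicator_of_notMem hy, zero_pow two_ne_zero]
    exact sq_nonneg δ

lemma tail_antitone : Antitone R.tail := fun _ _ hxy => sub_le_sub_left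
  (Finset.sum_le_sum_of_subset_of_nonneg (R.upTo_mono hxy) fun i _ _ => (R.prob_pos i).le) _

end LocalVariance

namespace IsRenewalDensity

variable {R} {ρ B : ℝ} {h c : ℝ → ℝ} (H : R.IsRenewalDensity ρ h)

include H in
lemma localVariance_le {L δ y : ℝ} (hB : ∀ y, h y ≤ B) (hc : ∀ y i, c (y - R.step i) = c y)
    (hcB : ∀ y, 0 ≤ c y ∧ c y ≤ B) (hclose : ∀ y, L ≤ y → |h y - c y| ≤ δ) (hL : 0 ≤ L)
    (hy : L ≤ y) :
    R.localVariance h y ≤ -R.defect ((Set.Ici L).indicator (h - c) ^ 2) y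
      + (2 * B ^ 2 * R.tail (y - L) + 2 * δ * Real.exp (-R.rate * y)) := by
  have hconv : R.conv R.prob ((h - fun _ => c y) ^ 2) y ≤
      R.conv R.prob ((Set.Ici L).indicator (h - c) ^ 2) y + B ^ 2 * R.tail (y - L) := by
    have hperiod : R.conv R.prob ((h - fun _ => c y) ^ 2) y = R.conv R.prob ((h - c) ^ 2) y :=
      Finset.sum_congr rfl fun i _ => by simp only [Pi.pow_apply, Pi.sub_apply, hc]
    rw [hperiod]
    refine R.conv_le_conv_add_mul_tail (sq_nonneg B) (fun x hx => ?_) (fun x _ _ => ?_) y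
    · rw [Pi.pow_apply, Pi.pow_apply, Set.indicator_of_mem (Set.mem_Ici.2 hx)]
    · refine le_add_of_nonneg_of_le (sq_nonneg _) (sq_le_sq.2 ?_)
      exact (abs_sub_le_of_nonneg_of_le (H.nonneg x) (hB x) (hcB x).1 (hcB x).2).trans
        (le_abs_self B)
  have hdef := H.abs_defect_le (hL.trans hy)
  have hsq : (h y - c y) ^ 2 - 2 * δ * Real.exp (-R.rate * y) ≤ (R.conv R.prob h y - c y) ^ 2 := by
    have hprod := mul_le_mul (hclose y hy) hdef (abs_nonneg _) ((abs_nonneg _).trans (hclose y hy))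
    rw [← abs_mul, defect_apply] at hprod
    nlinarith [le_abs_self ((h y - c y) * (h y - R.conv R.prob h y)),
      sq_nonneg (h y - R.conv R.prob h y)]
  have htail : c y ^ 2 * R.tail y ≤ B ^ 2 * R.tail (y - L) :=
    mul_le_mul (pow_le_pow_left₀ (hcB y).1 (hcB y).2 2) (tail_antitone (sub_le_self y hL))
      (R.tail_nonneg y) (sq_nonneg B)
  rw [R.localVariance_eq h (c y), defect_apply, Pi.pow_apply,
    Set.indicator_of_mem (Set.mem_Ici.2 hy), Pi.sub_apply]
  linarith

include H in
lemma localVariance_le_defect_add {L A δ y : ℝ} {V : ℝ → ℝ} (hB : ∀ y, h y ≤ B)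
    (hc : ∀ y i, c (y - R.step i) = c y) (hcB : ∀ y, 0 ≤ c y ∧ c y ≤ B)
    (hclose : ∀ y, L ≤ y → |h y - c y| ≤ δ) (hL : 0 ≤ L) (hA : 0 ≤ A) {K : ℝ}
    (hV : R.IsExpPotential K (L + A) V) (hy : L + A ≤ y) :
    R.localVariance h y ≤ R.defect ((fun _ => δ ^ 2) - (Set.Ici L).indicator (h - c) ^ 2
      + ((2 * B ^ 2 * R.expMoment + 2 * δ) * Real.exp (-R.rate * A)) • V) y := by
  have hδ : 0 ≤ δ := (abs_nonneg _).trans (hclose L le_rfl)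
  have hM := R.expMoment_nonneg
  have hexp : Real.exp (-R.rate * y)
      ≤ Real.exp (-R.rate * A) * Real.exp (-R.rate * (y - (L + A))) := by
    rw [← Real.exp_add, Real.exp_le_exp]
    nlinarith [R.rate_pos]
  have htail := R.tail_add_le A (y - (L + A))
  rw [show A + (y - (L + A)) = y - L by ring] at htail
  have hpot := mul_le_mul_of_nonneg_left (hV.exp_le_defect y hy)
    (by positivity : 0 ≤ (2 * B ^ 2 * R.expMoment + 2 * δ) * Real.exp (-R.rate * A))
  rw [map_add, map_sub, map_smul, Pi.add_apply, Pi.sub_apply, R.defect_const, Pi.smul_apply,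
    smul_eq_mul]
  linarith [H.localVariance_le hB hc hcB hclose hL (by linarith : L ≤ y),
    mul_le_mul_of_nonneg_left htail (by positivity : 0 ≤ 2 * B ^ 2),
    mul_le_mul_of_nonneg_left hexp (by positivity : 0 ≤ 2 * δ),
    mul_nonneg (sq_nonneg δ) (R.tail_nonneg y)]

include H in
/-- `h` is eventually close to a function that is constant along the jumps, so its local variance is
nearly `-defect (r ^ 2)` for a small `r`. -/
theorem exists_localVariance_le_defect {ε : ℝ} (hε : 0 < ε) :
    ∃ L V, (∀ y, 0 ≤ V y ∧ V y ≤ ε) ∧ (∀ y, L ≤ y → R.localVariance h y ≤ R.defect V y) ∧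
      ∀ y < L, R.defect V y = 0 := by
  obtain ⟨B, _, hB⟩ := H.exists_le
  obtain ⟨c, hc, hcB, hlim⟩ := H.exists_periodic_tendsto_sub hB
  obtain ⟨K, _, hpot⟩ := R.exists_isExpPotential
  obtain ⟨δ, hδ, hδε⟩ : ∃ δ > 0, δ ^ 2 = ε / 2 :=
    ⟨√(ε / 2), Real.sqrt_pos.2 (half_pos hε), Real.sq_sqrt (half_pos hε).le⟩
  obtain ⟨L, hL, hclose⟩ : ∃ L, 0 ≤ L ∧ ∀ y, L ≤ y → |h y - c y| ≤ δ := by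
    have habs := hlim.abs
    rw [abs_zero] at habs
    exact ((eventually_ge_atTop 0).and
      (eventually_forall_ge_atTop.2 (habs.eventually_le_const hδ))).exists
  obtain ⟨D, hD⟩ : ∃ D, D = 2 * B ^ 2 * R.expMoment + 2 * δ := ⟨_, rfl⟩
  obtain ⟨A, hsmall, hA⟩ := ((R.eventually_mul_exp_neg_rate_le (D * K)
    (half_pos hε)).and (eventually_ge_atTop 0)).exists
  obtain ⟨V, hV⟩ := hpot (L + A) (add_nonneg hL hA)
  have hD₀ : 0 ≤ D * Real.exp (-R.rate * A) := by
    have := R.expMoment_nonneg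
    rw [hD]
    positivity
  obtain ⟨W, hW⟩ : ∃ W : ℝ → ℝ, W = (fun _ => δ ^ 2) - (Set.Ici L).indicator (h - c) ^ 2
      + (D * Real.exp (-R.rate * A)) • V := ⟨_, rfl⟩
  have hW_nonneg : ∀ y, 0 ≤ W y := fun y => by
    rw [hW]
    exact add_nonneg (sub_nonneg.2 (sq_indicator_Ici_le hclose y)) (mul_nonneg hD₀ (hV.nonneg y))
  refine ⟨L + A, (Set.Ici (L + A)).indicator W, fun y =>
    ⟨Set.indicator_nonneg (fun x _ => hW_nonneg x) y, Set.indicator_le' (fun x _ => ?_)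
      (fun _ _ => hε.le) y⟩, fun y hy => ?_, fun y hy => defect_indicator_Ici_of_lt W hy⟩
  · have hDV := mul_le_mul_of_nonneg_left (hV.le x) hD₀
    simp only [hW, Pi.add_apply, Pi.sub_apply, Pi.pow_apply, Pi.smul_apply, smul_eq_mul, hδε]
    linarith [sq_nonneg ((Set.Ici L).indicator (h - c) x),
      mul_right_comm D K (Real.exp (-R.rate * A))]
  · refine le_trans ?_ (le_defect_indicator_Ici (fun x _ => hW_nonneg x) hy)
    rw [hW, hD]
    exact H.localVariance_le_defect_add hB hc hcB hclose hL hA hV hy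

end IsRenewalDensity

section SmallPotential

/-- `g` is dominated on `[0, ∞)` by the defect of functions that are `o(√X)` on `[0, X]`. The
dominating function may depend on `X`. -/
def HasSmallPotential (R : StepLaw ι) (g : ℝ → ℝ) : Prop :=
  ∀ ε > 0, ∀ᶠ X in atTop, ∃ V : ℝ → ℝ,
    (∀ y, 0 ≤ y → |g y| ≤ R.defect V y) ∧ ∀ y ∈ Set.Icc 0 X, V y ≤ ε * √X

variable {R} {f g : ℝ → ℝ}

lemma eventually_le_mul_sqrt (C : ℝ) {ε : ℝ} (hε : 0 < ε) : ∀ᶠ X in atTop, C ≤ ε * √X :=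
  (Real.tendsto_sqrt_atTop.const_mul_atTop hε).eventually_ge_atTop C

lemma HasSmallPotential.add (hf : R.HasSmallPotential f) (hg : R.HasSmallPotential g) :
    R.HasSmallPotential (f + g) := by
  intro ε hε
  filter_upwards [hf _ (half_pos hε), hg _ (half_pos hε)] with X ⟨V, hfV, hV⟩ ⟨W, hgW, hW⟩
  refine ⟨V + W, fun y hy => ?_, fun y hy => ?_⟩
  · rw [map_add]
    exact (abs_add_le _ _).trans (add_le_add (hfV y hy) (hgW y hy))
  · rw [Pi.add_apply]
    linarith [hV y hy, hW y hy]

lemma HasSmallPotential.congr (hf : R.HasSmallPotential f) (hfg : ∀ y, 0 ≤ y → g y = f y) :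
    R.HasSmallPotential g := by
  intro ε hε
  filter_upwards [hf ε hε] with X ⟨V, hfV, hV⟩
  exact ⟨V, fun y hy => hfg y hy ▸ hfV y hy, hV⟩

lemma hasSmallPotential_of_abs_le_mul_exp {C : ℝ} (hC : 0 ≤ C)
    (hg : ∀ y, 0 ≤ y → |g y| ≤ C * Real.exp (-R.rate * y)) : R.HasSmallPotential g := by
  intro ε hε
  obtain ⟨K, _, hpot⟩ := R.exists_isExpPotential
  obtain ⟨V, hV⟩ := hpot 0 le_rfl
  filter_upwards [eventually_le_mul_sqrt (C * K) hε] with X hX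
  refine ⟨C • V, fun y hy => (hg y hy).trans ?_, fun y _ => ?_⟩
  · rw [map_smul, Pi.smul_apply, smul_eq_mul]
    simpa using mul_le_mul_of_nonneg_left (hV.exp_le_defect y hy) hC
  · exact (mul_le_mul_of_nonneg_left (hV.le y) hC).trans hX

variable (R) in
lemma one_add_div_gap_le {y X : ℝ} (hyX : y ≤ X) (hX : 1 ≤ X) :
    1 + y / R.gap ≤ (1 + 1 / R.gap) * X := by
  rw [add_mul, one_mul, one_div_mul_eq_div]
  exact add_le_add hX (div_le_div_of_nonneg_right hyX R.gap_pos.le)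

lemma IsCentered.abs_conv_le_defect {ζ : ι → ℝ} {v B K L t : ℝ} {Q V : ℝ → ℝ}
    (hζ : R.IsCentered ζ v) (hf : ∀ x < 0, f x = 0) (hB : ∀ x, |f x| ≤ B) (ht : 0 < t)
    (hvar : ∀ y, L ≤ y → R.localVariance f y ≤ R.defect Q y) (hzero : ∀ y < L, R.defect Q y = 0)
    (hV : R.IsExpPotential K 0 V) {y : ℝ} (hy : 0 ≤ y) :
    |R.conv (R.prob * ζ) f y| ≤ R.defect ((t * v) • (fun x => 1 + x / R.gap) + (4 * t)⁻¹ • Q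
      + (B * (1 + v) * Real.exp (R.rate * L)) • V) y := by
  have hv := hζ.nonneg
  have hB₀ : 0 ≤ B := (abs_nonneg _).trans (hB 0)
  have hlin := mul_le_mul_of_nonneg_left (R.one_le_defect_linear hy) (mul_nonneg ht.le hv)
  have hpot := mul_le_mul_of_nonneg_left (hV.exp_le_defect y hy)
    (by positivity : 0 ≤ B * (1 + v) * Real.exp (R.rate * L))
  rw [sub_zero] at hpot
  simp only [map_add, map_smul, Pi.add_apply, Pi.smul_apply, smul_eq_mul]
  rcases le_or_gt L y with hLy | hLy
  · have hle := hζ.abs_conv_le hf ht y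
    have hQ := mul_le_mul_of_nonneg_left (hvar y hLy) (inv_nonneg.2 (by positivity : 0 ≤ 4 * t))
    rw [div_eq_inv_mul] at hle
    have hpot_nonneg : 0 ≤ B * (1 + v) * Real.exp (R.rate * L) * Real.exp (-R.rate * y) := by
      positivity
    linarith
  · have hle := hζ.abs_conv_le_of_abs_le hB y
    have hexp : B * (1 + v) ≤ B * (1 + v) * Real.exp (R.rate * L) * Real.exp (-R.rate * y) := by
      rw [mul_assoc _ (Real.exp _), ← Real.exp_add]
      exact le_mul_of_one_le_right (by positivity) (Real.one_le_exp (by nlinarith [R.rate_pos]))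
    rw [hzero y hLy]
    linarith [mul_nonneg ht.le hv]

lemma IsRenewalDensity.hasSmallPotential_conv {ρ v : ℝ} {ζ : ι → ℝ} {h : ℝ → ℝ}
    (H : R.IsRenewalDensity ρ h) (hζ : R.IsCentered ζ v) :
    R.HasSmallPotential (R.conv (R.prob * ζ) h) := by
  intro ε hε
  have hv := hζ.nonneg
  have hgap := R.gap_pos
  obtain ⟨B, hB₀, hB⟩ := H.exists_le
  obtain ⟨K, _, hpot⟩ := R.exists_isExpPotential
  obtain ⟨V, hV⟩ := hpot 0 le_rfl
  obtain ⟨δ, hδ, hδε⟩ : ∃ δ > 0, δ * (v * (1 + 1 / R.gap)) ≤ ε / 4 := by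
    refine ⟨ε / 4 / (v * (1 + 1 / R.gap) + 1), by positivity, ?_⟩
    rw [div_mul_eq_mul_div]
    exact div_le_of_le_mul₀ (by positivity) (by positivity)
      (mul_le_mul_of_nonneg_left (by linarith) (by positivity))
  obtain ⟨L, Q, hQ, hvar, hzero⟩ := H.exists_localVariance_le_defect (mul_pos hδ hε)
  obtain ⟨C, hC⟩ : ∃ C, C = B * (1 + v) * Real.exp (R.rate * L) := ⟨_, rfl⟩
  have hC₀ : 0 ≤ C := by rw [hC]; positivity
  filter_upwards [eventually_le_mul_sqrt (C * K) (half_pos hε), eventually_ge_atTop 1] with X hX hX₁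
  have hsqrt : 0 < √X := Real.sqrt_pos.2 (one_pos.trans_le hX₁)
  refine ⟨_, fun y hy => hζ.abs_conv_le_defect H.eq_zero_of_neg (H.abs_le_bound hB)
    (div_pos hδ hsqrt) hvar hzero hV hy, fun y hy => ?_⟩
  have hlin : δ / √X * v * (1 + y / R.gap) ≤ ε / 4 * √X := calc
    δ / √X * v * (1 + y / R.gap) ≤ δ / √X * v * ((1 + 1 / R.gap) * (√X * √X)) := by
      rw [Real.mul_self_sqrt (by linarith)]
      exact mul_le_mul_of_nonneg_left (R.one_add_div_gap_le hy.2 hX₁) (by positivity)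
    _ = δ * (v * (1 + 1 / R.gap)) * √X := by field_simp
    _ ≤ ε / 4 * √X := mul_le_mul_of_nonneg_right hδε hsqrt.le
  have hvariance : (4 * (δ / √X))⁻¹ * Q y ≤ ε / 4 * √X := calc
    (4 * (δ / √X))⁻¹ * Q y ≤ (4 * (δ / √X))⁻¹ * (δ * ε) :=
      mul_le_mul_of_nonneg_left (hQ y).2 (by positivity)
    _ = ε / 4 * √X := by field_simp
  have hexp : C * V y ≤ ε / 2 * √X := (mul_le_mul_of_nonneg_left (hV.le y) hC₀).trans hX
  rw [← hC]
  simp only [Pi.add_apply, Pi.smul_apply, smul_eq_mul]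
  linarith

theorem HasSmallPotential.eventually_abs_le (hf : R.HasSmallPotential (R.defect f)) {ε : ℝ}
    (hε : 0 < ε) : ∀ᶠ X in atTop, ∀ y ∈ Set.Icc 0 X, |f y| ≤ ε * √X := by
  filter_upwards [hf ε hε] with X ⟨V, hfV, hV⟩ y hy
  have hcomp := abs_le_of_abs_defect_le (R.isStepClosed_Icc X) fun x hx => Or.inr (hfV x hx.1)
  exact (hcomp y hy).trans (hV y hy)

theorem HasSmallPotential.isLittleO_sqrt (hf : R.HasSmallPotential (R.defect f)) :
    f =o[atTop] Real.sqrt := by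
  refine isLittleO_iff.2 fun ε hε => ?_
  filter_upwards [hf.eventually_abs_le hε, eventually_ge_atTop 0] with X hX hX₀
  rw [Real.norm_eq_abs, Real.norm_eq_abs, abs_of_nonneg (Real.sqrt_nonneg X)]
  exact hX X ⟨hX₀, le_rfl⟩

variable (R) in
lemma localVariance_le_defect (f : ℝ → ℝ) (y : ℝ) :
    R.localVariance f y ≤ -R.defect (f ^ 2) y + 2 * |f y| * |R.defect f y| := by
  have hprod := le_abs_self (f y * R.defect f y)
  rw [abs_mul] at hprod
  rw [localVariance, defect_apply R (f ^ 2), Pi.pow_apply]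
  rw [defect_apply] at hprod ⊢
  nlinarith [sq_nonneg (f y - R.conv R.prob f y)]

/-- The term `-f ^ 2` is the potential of the main part of the local variance of `f`; it helps. -/
lemma IsCentered.two_mul_abs_conv_le_defect {ζ : ι → ℝ} {v t κ : ℝ} {V : ℝ → ℝ}
    (hζ : R.IsCentered ζ v) (hf : ∀ x < 0, f x = 0) (ht : 0 < t) {y : ℝ} (hy : 0 ≤ y)
    (hfκ : |f y| ≤ κ) (hV : |R.defect f y| ≤ R.defect V y) :
    2 * |R.conv (R.prob * ζ) f y| ≤ R.defect ((2 * t * v) • (fun x => 1 + x / R.gap)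
      + (2 * t)⁻¹ • ((2 * κ) • V - f ^ 2)) y := by
  have hlin := mul_le_mul_of_nonneg_left (R.one_le_defect_linear hy) (mul_nonneg ht.le hζ.nonneg)
  have hprod := mul_le_mul hfκ hV (abs_nonneg _) ((abs_nonneg _).trans hfκ)
  have hvar : (2 * t)⁻¹ * R.localVariance f y
      ≤ (2 * t)⁻¹ * (2 * κ * R.defect V y - R.defect (f ^ 2) y) :=
    mul_le_mul_of_nonneg_left (by linarith [R.localVariance_le_defect f y]) (by positivity)
  have hle := hζ.abs_conv_le hf ht y
  have hhalf : R.localVariance f y / (4 * t) = (2 * t)⁻¹ * R.localVariance f y / 2 := by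
    field_simp
    norm_num
  simp only [map_add, map_sub, map_smul, Pi.add_apply, Pi.sub_apply, Pi.smul_apply, smul_eq_mul]
  linarith

theorem IsCentered.isLittleO_id {F : ℝ → ℝ} {ζ : ι → ℝ} {v : ℝ} (hζ : R.IsCentered ζ v)
    (hf_neg : ∀ x < 0, f x = 0) (hf : R.HasSmallPotential (R.defect f))
    (hg : R.HasSmallPotential g)
    (hF : ∀ y, 0 ≤ y → R.defect F y = 2 * R.conv (R.prob * ζ) f y + g y) :
    F =o[atTop] id := by
  have hv := hζ.nonneg
  have hgap := R.gap_pos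
  refine isLittleO_iff.2 fun ε hε => ?_
  obtain ⟨δ, hδ, hδε⟩ : ∃ δ > 0, δ * (2 * v * (1 + 1 / R.gap) + 2) = ε :=
    ⟨ε / (2 * v * (1 + 1 / R.gap) + 2), by positivity, div_mul_cancel₀ _ (by positivity)⟩
  filter_upwards [hf δ hδ, hg δ hδ, hf.eventually_abs_le hδ, eventually_ge_atTop 1]
    with X ⟨V, hfV, hV⟩ ⟨W, hgW, hW⟩ hfX hX
  have hX₀ : 0 ≤ X := zero_le_one.trans hX
  have hXX : X ∈ Set.Icc 0 X := ⟨hX₀, le_rfl⟩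
  have hcomp := abs_le_of_abs_defect_le (R.isStepClosed_Icc X) (f := F)
    (V := (2 * δ * v) • (fun x => 1 + x / R.gap) + (2 * δ)⁻¹ • ((2 * (δ * √X)) • V - f ^ 2) + W)
    (fun y hy => Or.inr ?_) X hXX
  · have hlin := mul_le_mul_of_nonneg_left (R.one_add_div_gap_le le_rfl hX)
      (by positivity : 0 ≤ 2 * δ * v)
    have hquad : (2 * δ)⁻¹ * (2 * (δ * √X) * V X - f X ^ 2) ≤ δ * X := calc
      (2 * δ)⁻¹ * (2 * (δ * √X) * V X - f X ^ 2) ≤ (2 * δ)⁻¹ * (2 * (δ * √X) * (δ * √X)) :=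
        mul_le_mul_of_nonneg_left ((sub_le_self _ (sq_nonneg _)).trans
          (mul_le_mul_of_nonneg_left (hV X hXX) (by positivity))) (by positivity)
      _ = δ * (√X * √X) := by field_simp
      _ = δ * X := by rw [Real.mul_self_sqrt hX₀]
    have hsqrt : δ * √X ≤ δ * X := mul_le_mul_of_nonneg_left
      (Real.sqrt_le_iff.2 ⟨hX₀, le_self_pow₀ hX two_ne_zero⟩) hδ.le
    rw [Real.norm_eq_abs, id, Real.norm_eq_abs, abs_of_nonneg hX₀, ← hδε]
    simp only [Pi.add_apply, Pi.sub_apply, Pi.pow_apply, Pi.smul_apply, smul_eq_mul] at hcomp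
    linarith [hW X hXX]
  · rw [hF y hy.1, map_add]
    refine (abs_add_le _ _).trans (add_le_add ?_ (hgW y hy.1))
    rw [abs_mul, abs_two]
    exact hζ.two_mul_abs_conv_le_defect hf_neg hδ hy.1 (hfX y hy) (hfV y hy.1)

end SmallPotential

section Moments

lemma summable_prob_mul_step_pow (n : ℕ) : Summable fun i => R.prob i * R.step i ^ n := by
  refine (R.summable_expMoment.mul_left (n.factorial / R.rate ^ n)).of_nonneg_of_le
    (fun i => mul_nonneg (R.prob_pos i).le (pow_nonneg (R.step_pos i).le n)) fun i => ?_
  have hrate := R.rate_pos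
  have hexp := Real.pow_div_factorial_le_exp _ (mul_pos hrate (R.step_pos i)).le n
  rw [div_le_iff₀' (by positivity), mul_pow, ← le_div_iff₀' (by positivity)] at hexp
  rw [mul_left_comm, div_mul_eq_mul_div]
  exact mul_le_mul_of_nonneg_left hexp (R.prob_pos i).le

lemma summable_prob_mul_eval (q : Polynomial ℝ) :
    Summable fun i => R.prob i * q.eval (R.step i) := by
  induction q using Polynomial.induction_on' with
  | add q r hq hr => simpa only [Polynomial.eval_add, mul_add] using hq.add hr
  | monomial n a =>
    simpa only [Polynomial.eval_monomial, mul_left_comm]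
      using (R.summable_prob_mul_step_pow n).mul_left a

/-- The mean jump. -/
def mean : ℝ := ∑' i, R.prob i * R.step i

/-- The variance of a jump divided by the square of its mean. -/
def relVariance : ℝ := ∑' i, R.prob i * (1 - R.step i / R.mean) ^ 2

lemma hasSum_mean : HasSum (fun i => R.prob i * R.step i) R.mean := by
  have hsum := R.summable_prob_mul_step_pow 1
  simp only [pow_one] at hsum
  exact hsum.hasSum

lemma mean_pos : 0 < R.mean := by
  obtain ⟨a⟩ := R.nonempty
  exact (mul_pos (R.prob_pos a) (R.step_pos a)).trans_le (le_hasSum R.hasSum_mean a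
    fun i _ => (mul_pos (R.prob_pos i) (R.step_pos i)).le)

lemma isCentered_one_sub_step_div_mean :
    R.IsCentered (fun i => 1 - R.step i / R.mean) R.relVariance where
  hasSum_mul := by
    have hsum := R.hasSum_prob.sub (R.hasSum_mean.div_const R.mean)
    rw [div_self R.mean_pos.ne', sub_self] at hsum
    exact hsum.congr_fun fun i => by ring
  hasSum_mul_sq := by
    refine Summable.hasSum ?_
    have hsum := R.summable_prob_mul_eval ((1 - Polynomial.C R.mean⁻¹ * Polynomial.X) ^ 2)
    simpa [div_eq_inv_mul] using hsum

lemma exists_isCentered_sq_sub :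
    ∃ v, R.IsCentered
      (fun i => (1 - R.step i / R.mean) ^ 2 - R.relVariance / R.mean * R.step i) v := by
  refine ⟨_, ?_, Summable.hasSum ?_⟩
  · have hsum := R.isCentered_one_sub_step_div_mean.hasSum_mul_sq.sub
      (R.hasSum_mean.mul_left (R.relVariance / R.mean))
    rw [div_mul_cancel₀ _ R.mean_pos.ne', sub_self] at hsum
    exact hsum.congr_fun fun i => by ring
  · have hsum := R.summable_prob_mul_eval (((1 - Polynomial.C R.mean⁻¹ * Polynomial.X) ^ 2
      - Polynomial.C (R.relVariance / R.mean) * Polynomial.X) ^ 2)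
    simpa [div_eq_inv_mul] using hsum

lemma relVariance_eq : R.relVariance = (∑' i, R.prob i * R.step i ^ 2) / R.mean ^ 2 - 1 := by
  refine R.isCentered_one_sub_step_div_mean.hasSum_mul_sq.unique ?_
  have hsum := (R.hasSum_prob.sub (R.hasSum_mean.mul_left (2 / R.mean))).add
    ((R.summable_prob_mul_step_pow 2).hasSum.div_const (R.mean ^ 2))
  have hvalue : 1 - 2 / R.mean * R.mean + (∑' i, R.prob i * R.step i ^ 2) / R.mean ^ 2
      = (∑' i, R.prob i * R.step i ^ 2) / R.mean ^ 2 - 1 := by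
    rw [div_mul_cancel₀ _ R.mean_pos.ne']
    ring
  exact (hvalue ▸ hsum).congr_fun fun i => by ring

lemma relVariance_pos {a b : ι} (hab : R.step a ≠ R.step b) : 0 < R.relVariance := by
  have hζ := R.isCentered_one_sub_step_div_mean
  refine hζ.nonneg.lt_of_ne fun hzero => hab ?_
  have hfun := (hasSum_zero_iff_of_nonneg fun i =>
    mul_nonneg (R.prob_pos i).le (sq_nonneg _)).1 (hzero ▸ hζ.hasSum_mul_sq)
  have hstep : ∀ i, R.step i = R.mean := fun i => by
    have hi := (mul_eq_zero.1 (congrFun hfun i)).resolve_left (R.prob_pos i).ne'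
    rw [sq_eq_zero_iff, sub_eq_zero] at hi
    exact (div_eq_one_iff_eq R.mean_pos.ne').1 hi.symm
  rw [hstep a, hstep b]

/-- Functions that arise from the same renewal series as `h` when its `m`-th term is weighted by `m`
and by `m ^ 2`. -/
structure IsRenewalMoments (R : StepLaw ι) (ρ : ℝ) (h h₁ h₂ : ℝ → ℝ) : Prop
    extends R.IsRenewalDensity ρ h where
  fst_eq_zero_of_neg : ∀ y < 0, h₁ y = 0
  defect_fst_eq : ∀ y, 0 ≤ y → R.defect h₁ y = R.conv R.prob h y
  defect_snd_eq : ∀ y, 0 ≤ y → R.defect h₂ y = R.conv R.prob ((2 : ℝ) • h₁ + h) y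

/-- The first moment recentred at `y / mean`. -/
def centeredFst (h h₁ : ℝ → ℝ) (y : ℝ) : ℝ := h₁ y - y / R.mean * h y

/-- The second moment recentred at the first-order prediction `y / mean`, minus the expected main
term `relVariance * (y / mean)` of the variance. -/
def centeredSnd (h h₁ h₂ : ℝ → ℝ) (y : ℝ) : ℝ :=
  h₂ y - 2 * (y / R.mean) * h₁ y + ((y / R.mean) ^ 2 - R.relVariance * (y / R.mean)) * h y

lemma IsRenewalDensity.hasSmallPotential_mul_pow_mul_defect {R : StepLaw ι} {ρ : ℝ} {h : ℝ → ℝ}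
    (H : R.IsRenewalDensity ρ h) (a : ℝ) (n : ℕ) :
    R.HasSmallPotential fun y => a * y ^ n * R.defect h y := by
  have hδ : 0 < ρ - R.rate := sub_pos.2 H.rate_lt
  refine hasSmallPotential_of_abs_le_mul_exp (C := |a| * (n.factorial / (ρ - R.rate) ^ n))
    (by positivity) fun y hy => ?_
  have hexp := Real.pow_div_factorial_le_exp _ (mul_nonneg hδ.le hy) n
  rw [div_le_iff₀' (by positivity), mul_pow, ← le_div_iff₀' (by positivity)] at hexp
  rw [H.defect_eq y hy, abs_mul, abs_mul, Real.abs_exp, abs_of_nonneg (pow_nonneg hy n), mul_assoc,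
    mul_assoc]
  refine mul_le_mul_of_nonneg_left ?_ (abs_nonneg a)
  calc y ^ n * Real.exp (-ρ * y)
      ≤ n.factorial * Real.exp ((ρ - R.rate) * y) / (ρ - R.rate) ^ n * Real.exp (-ρ * y) :=
        mul_le_mul_of_nonneg_right hexp (Real.exp_pos _).le
    _ = n.factorial / (ρ - R.rate) ^ n * (Real.exp ((ρ - R.rate) * y) * Real.exp (-ρ * y)) := by
        ring
    _ = n.factorial / (ρ - R.rate) ^ n * Real.exp (-R.rate * y) := by
        rw [← Real.exp_add]
        ring_nf

namespace IsRenewalMoments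

variable {R} {ρ : ℝ} {h h₁ h₂ : ℝ → ℝ} (M : R.IsRenewalMoments ρ h h₁ h₂)
include M

lemma centeredFst_eq_zero_of_neg {y : ℝ} (hy : y < 0) : R.centeredFst h h₁ y = 0 := by
  rw [centeredFst, M.fst_eq_zero_of_neg y hy, M.eq_zero_of_neg y hy, mul_zero, sub_zero]

lemma defect_centeredFst {y : ℝ} (hy : 0 ≤ y) :
    R.defect (R.centeredFst h h₁) y = R.conv (R.prob * fun i => 1 - R.step i / R.mean) h y
      + -R.mean⁻¹ * y ^ 1 * R.defect h y := by
  have hfst := M.defect_fst_eq y hy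
  have hsum : R.conv R.prob (R.centeredFst h h₁) y
      + R.conv (R.prob * fun i => 1 - R.step i / R.mean) h y + y / R.mean * R.conv R.prob h y
      = R.conv R.prob h₁ y + R.conv R.prob h y := by
    simp only [conv_apply, centeredFst, Finset.mul_sum, ← Finset.sum_add_distrib, Pi.mul_apply]
    exact Finset.sum_congr rfl fun i _ => by ring
  rw [defect_apply] at hfst
  rw [defect_apply, defect_apply, centeredFst]
  linear_combination hfst - hsum

lemma defect_centeredSnd {y : ℝ} (hy : 0 ≤ y) :
    R.defect (R.centeredSnd h h₁ h₂) y
      = 2 * R.conv (R.prob * fun i => 1 - R.step i / R.mean) (R.centeredFst h h₁) y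
        + (R.conv (R.prob * fun i =>
            (1 - R.step i / R.mean) ^ 2 - R.relVariance / R.mean * R.step i) h y
          + (R.mean⁻¹ ^ 2 * y ^ 2 * R.defect h y
            + -(R.relVariance * R.mean⁻¹) * y ^ 1 * R.defect h y)) := by
  have hfst := M.defect_fst_eq y hy
  have hsnd := M.defect_snd_eq y hy
  have hsum : R.conv R.prob (R.centeredSnd h h₁ h₂) y
      + 2 * R.conv (R.prob * fun i => 1 - R.step i / R.mean) (R.centeredFst h h₁) y
      + R.conv (R.prob * fun i =>
          (1 - R.step i / R.mean) ^ 2 - R.relVariance / R.mean * R.step i) h y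
      + 2 * (y / R.mean) * (R.conv R.prob h₁ y + R.conv R.prob h y)
      = R.conv R.prob h₂ y + R.conv R.prob ((2 : ℝ) • h₁ + h) y
        + ((y / R.mean) ^ 2 - R.relVariance * (y / R.mean)) * R.conv R.prob h y := by
    simp only [conv_apply, centeredFst, centeredSnd, Finset.mul_sum, ← Finset.sum_add_distrib,
      Pi.mul_apply, Pi.add_apply, Pi.smul_apply, smul_eq_mul]
    exact Finset.sum_congr rfl fun i _ => by ring
  rw [defect_apply] at hfst hsnd
  rw [defect_apply, defect_apply R h, centeredSnd]
  linear_combination hsnd - 2 * (y / R.mean) * hfst - hsum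

lemma hasSmallPotential_defect_centeredFst :
    R.HasSmallPotential (R.defect (R.centeredFst h h₁)) := by
  refine ((M.hasSmallPotential_conv R.isCentered_one_sub_step_div_mean).add
    (M.hasSmallPotential_mul_pow_mul_defect (-R.mean⁻¹) 1)).congr fun y hy => ?_
  exact M.defect_centeredFst hy

theorem isLittleO_centeredFst : R.centeredFst h h₁ =o[atTop] Real.sqrt :=
  M.hasSmallPotential_defect_centeredFst.isLittleO_sqrt

theorem isLittleO_centeredSnd : R.centeredSnd h h₁ h₂ =o[atTop] id := by
  obtain ⟨v, hv⟩ := R.exists_isCentered_sq_sub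
  exact R.isCentered_one_sub_step_div_mean.isLittleO_id (fun _ => M.centeredFst_eq_zero_of_neg)
    M.hasSmallPotential_defect_centeredFst ((M.hasSmallPotential_conv hv).add
      ((M.hasSmallPotential_mul_pow_mul_defect _ 2).add
        (M.hasSmallPotential_mul_pow_mul_defect _ 1))) fun _ => M.defect_centeredSnd

omit M in
lemma div_sub_sq_div_eq {y : ℝ} (hh : h y ≠ 0) (hy : y ≠ 0) :
    (h₂ y / h y - (h₁ y / h y) ^ 2) / y = R.relVariance / R.mean
      + (R.centeredSnd h h₁ h₂ y / y / h y - R.centeredFst h h₁ y ^ 2 / y / h y ^ 2) := by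
  have hmean := R.mean_pos.ne'
  rw [centeredFst, centeredSnd]
  field_simp
  ring

theorem tendsto_variance_div :
    Tendsto (fun y => (h₂ y / h y - (h₁ y / h y) ^ 2) / y) atTop
      (nhds (R.relVariance / R.mean)) := by
  obtain ⟨b, hb, hbh⟩ := M.exists_pos_le
  have hbound : ∀ n : ℕ, IsBoundedUnder (· ≤ ·) atTop (norm ∘ fun y => (h y ^ n)⁻¹) := fun n => by
    refine isBoundedUnder_of_eventually_le (a := (b ^ n)⁻¹) ?_
    filter_upwards [eventually_ge_atTop 0] with y hy
    have hhy := hb.trans_le (hbh y hy)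
    rw [Function.comp_apply, Real.norm_of_nonneg (by positivity)]
    exact inv_anti₀ (by positivity) (pow_le_pow_left₀ hb.le (hbh y hy) n)
  have hfst := M.isLittleO_centeredFst.tendsto_div_nhds_zero.pow 2
  rw [zero_pow two_ne_zero] at hfst
  have hlim := ((M.isLittleO_centeredSnd.tendsto_div_nhds_zero.zero_mul_isBoundedUnder_le
    (hbound 1)).sub (hfst.zero_mul_isBoundedUnder_le (hbound 2))).const_add (R.relVariance / R.mean)
  rw [sub_zero, add_zero] at hlim
  refine hlim.congr' ?_
  filter_upwards [eventually_gt_atTop 0] with y hy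
  rw [div_sub_sq_div_eq (hb.trans_le (hbh y hy.le)).ne' hy.ne', pow_one, div_pow,
    Real.sq_sqrt hy.le, id, div_eq_mul_inv _ (h y), div_eq_mul_inv _ (h y ^ 2)]

end IsRenewalMoments

end Moments

end StepLaw

section Factorizations

lemma arithmeticFunction_pow_apply {S : Type*} [CommSemiring S] (f : ArithmeticFunction S)
    (m n : ℕ) : (f ^ m) n = ∑ t ∈ Nat.finMulAntidiag m n, ∏ i, f (t i) := by
  induction m generalizing n with
  | zero =>
    rcases eq_or_ne n 1 with rfl | hn
    · simp [Nat.finMulAntidiag_one]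
    · simp [ArithmeticFunction.one_apply_ne hn, Nat.finMulAntidiag_zero_left hn]
  | succ m ih =>
    simp only [pow_succ', ArithmeticFunction.mul_apply, ih, Finset.mul_sum]
    rw [Finset.sum_sigma']
    refine Finset.sum_nbij' (fun x => Fin.cons x.1.1 x.2)
      (fun t => ⟨(t 0, ∏ i, Fin.tail t i), Fin.tail t⟩) ?_ ?_ ?_ ?_ ?_
    · rintro ⟨⟨d, k⟩, t⟩ hx
      simp only [Finset.mem_sigma, Nat.mem_divisorsAntidiagonal, Nat.mem_finMulAntidiag] at hx
      rw [Nat.mem_finMulAntidiag, Fin.prod_cons, hx.2.1]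
      exact hx.1
    · intro t ht
      rw [Nat.mem_finMulAntidiag, Fin.prod_univ_succ] at ht
      simp only [Finset.mem_sigma, Nat.mem_divisorsAntidiagonal, Nat.mem_finMulAntidiag]
      exact ⟨ht, trivial, right_ne_zero_of_mul (ht.1.trans_ne ht.2)⟩
    · rintro ⟨⟨d, k⟩, t⟩ hx
      simp only [Finset.mem_sigma, Nat.mem_finMulAntidiag] at hx
      simp [hx.2.1]
    · exact fun t _ => Fin.cons_self_tail t
    · exact fun x _ => by simp [Fin.prod_univ_succ]

/-- The indicator function of `P` as an arithmetic function, which has to vanish at `0`. -/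
def indicatorFunction (P : Set ℕ) : ArithmeticFunction ℝ :=
  ⟨(P \ {0}).indicator 1, by simp⟩

variable {P : Set ℕ}

lemma indicatorFunction_apply (hP : 0 ∉ P) (n : ℕ) : indicatorFunction P n = P.indicator 1 n := by
  rw [← Set.sdiff_singleton_eq_self hP]
  simp [indicatorFunction]

open Classical in
lemma af_eq_pow_indicatorFunction (hP : 0 ∉ P) (m n : ℕ) :
    (af P m n : ℝ) = (indicatorFunction P ^ m) n := by
  have hmem : ∀ t : Fin m → ℕ,
      t ∈ (Nat.finMulAntidiag m n).filter (fun t => ∀ i, t i ∈ P)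
        ↔ (∀ i, t i ∈ P) ∧ ∏ i, t i = n := by
    intro t
    rw [Finset.mem_filter, Nat.mem_finMulAntidiag, and_comm, and_congr_right_iff]
    refine fun ht => and_iff_left_of_imp ?_
    rintro rfl
    exact Finset.prod_ne_zero_iff.2 fun i _ hi => hP (hi ▸ ht i)
  rw [af, Nat.subtype_card _ hmem, arithmeticFunction_pow_apply, Finset.card_filter, Nat.cast_sum]
  refine Finset.sum_congr rfl fun t _ => ?_
  simp only [indicatorFunction_apply hP, Set.indicator_apply, Pi.one_apply, Finset.prod_ite_zero,
    Finset.mem_univ, true_imp_iff, Finset.prod_const_one, Nat.cast_ite, Nat.cast_one, Nat.cast_zero]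

lemma af_eq_zero_of_lt_two_pow (hP : ∀ n ∈ P, 2 ≤ n) {m n : ℕ} (hn : n < 2 ^ m) : af P m n = 0 := by
  refine Nat.card_eq_zero.2 (Or.inl ⟨fun ⟨t, ht, hprod⟩ => hn.not_ge ?_⟩)
  calc 2 ^ m = ∏ _i : Fin m, 2 := by rw [Finset.prod_const, Finset.card_fin]
    _ ≤ ∏ i, t i := Finset.prod_le_prod' fun i _ => hP _ (ht i)
    _ = n := hprod

/-- The number of ordered factorizations of the integers `1, …, N` into `m` elements of `P`. -/
def afCum (P : Set ℕ) (m N : ℕ) : ℝ := ∑ n ∈ Finset.Ioc 0 N, (af P m n : ℝ)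

lemma afCum_eq_zero (hP : ∀ n ∈ P, 2 ≤ n) {m N : ℕ} (hN : N ≤ m) : afCum P m N = 0 := by
  refine Finset.sum_eq_zero fun n hn => ?_
  rw [af_eq_zero_of_lt_two_pow hP, Nat.cast_zero]
  exact ((Finset.mem_Ioc.1 hn).2.trans hN).trans_lt Nat.lt_two_pow_self

lemma afCum_nonneg (m N : ℕ) : 0 ≤ afCum P m N := Finset.sum_nonneg fun _ _ => Nat.cast_nonneg _

lemma afCum_mono (m : ℕ) : Monotone (afCum P m) := fun _ _ hNM =>
  Finset.sum_le_sum_of_subset_of_nonneg (Finset.Ioc_subset_Ioc_right hNM)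
    fun _ _ _ => Nat.cast_nonneg _

lemma afCum_zero_left (hP : 0 ∉ P) {N : ℕ} (hN : 1 ≤ N) : afCum P 0 N = 1 := by
  simp only [afCum, af_eq_pow_indicatorFunction hP, pow_zero, ArithmeticFunction.one_apply]
  rw [Finset.sum_ite_eq', if_pos (Finset.mem_Ioc.2 ⟨one_pos, hN⟩)]

open Classical in
lemma afCum_succ (hP : 0 ∉ P) (m N : ℕ) :
    afCum P (m + 1) N = ∑ d ∈ Finset.Ioc 0 N with d ∈ P, afCum P m (N / d) := by
  simp only [afCum, af_eq_pow_indicatorFunction hP]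
  rw [pow_succ', ArithmeticFunction.sum_Ioc_mul_eq_sum_sum, Finset.sum_filter]
  simp only [indicatorFunction_apply hP, Set.indicator_apply, Pi.one_apply, ite_mul, one_mul,
    zero_mul]

/-- The sum of `u m` over all ordered factorizations of the integers `1, …, N`, where `m` is the
number of factors; as the factors are at least `2`, this number is less than `N`
(`weightedSum_apply`). -/
def weightedSum (P : Set ℕ) (N : ℕ) : (ℕ → ℝ) →ₗ[ℝ] ℝ :=
  ∑ m ∈ Finset.range N, afCum P m N • LinearMap.proj m

lemma weightedSum_apply (hP : ∀ n ∈ P, 2 ≤ n) (u : ℕ → ℝ) {N K : ℕ} (hNK : N ≤ K) :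
    weightedSum P N u = ∑ m ∈ Finset.range K, u m * afCum P m N := by
  simp only [weightedSum, LinearMap.sum_apply, LinearMap.smul_apply, LinearMap.proj_apply,
    smul_eq_mul, mul_comm (afCum P _ N)]
  refine Finset.sum_subset (Finset.range_mono hNK) fun m _ hm => ?_
  rw [afCum_eq_zero hP (by simpa using hm), mul_zero]

lemma sum_tsum_mul_af (hP : ∀ n ∈ P, 2 ≤ n) (u : ℕ → ℝ) (N : ℕ) :
    ∑ n ∈ Finset.Icc 1 N, ∑' m, u m * (af P m n : ℝ) = weightedSum P N u := by
  simp only [weightedSum_apply hP u le_rfl, afCum, Finset.mul_sum]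
  rw [Finset.sum_comm]
  refine Finset.sum_congr rfl fun n hn => tsum_eq_sum fun m hm => ?_
  rw [af_eq_zero_of_lt_two_pow hP, Nat.cast_zero, mul_zero]
  exact ((Finset.mem_Icc.1 hn).2.trans (by simpa using hm)).trans_lt Nat.lt_two_pow_self

lemma Acum_eq_weightedSum (hP : ∀ n ∈ P, 2 ≤ n) (N : ℕ) : Acum P N = weightedSum P N 1 := by
  simp only [← sum_tsum_mul_af hP, Pi.one_apply, one_mul, Acum, aTot]

open Classical in
lemma weightedSum_eq_add_sum (hP : ∀ n ∈ P, 2 ≤ n) (u : ℕ → ℝ) {N : ℕ} (hN : 1 ≤ N) :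
    weightedSum P N u
      = u 0 + ∑ d ∈ Finset.Ioc 0 N with d ∈ P, weightedSum P (N / d) (fun m => u (m + 1)) := by
  have hP₀ : 0 ∉ P := fun h => two_pos.not_ge (hP 0 h)
  rw [weightedSum_apply hP u N.le_succ, Finset.sum_range_succ', afCum_zero_left hP₀ hN, mul_one,
    add_comm]
  simp only [afCum_succ hP₀, Finset.mul_sum, fun d => weightedSum_apply hP (fun m => u (m + 1))
    (Nat.div_le_self N d)]
  rw [Finset.sum_comm]

lemma weightedSum_nonneg {u : ℕ → ℝ} (hu : 0 ≤ u) (N : ℕ) : 0 ≤ weightedSum P N u := by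
  simp only [weightedSum, LinearMap.sum_apply]
  exact Finset.sum_nonneg fun m _ => mul_nonneg (afCum_nonneg m N) (hu m)

lemma weightedSum_mono (hP : ∀ n ∈ P, 2 ≤ n) {u : ℕ → ℝ} (hu : 0 ≤ u) {N M : ℕ} (hNM : N ≤ M) :
    weightedSum P N u ≤ weightedSum P M u := by
  rw [weightedSum_apply hP u hNM, weightedSum_apply hP u le_rfl]
  exact Finset.sum_le_sum fun m _ => mul_le_mul_of_nonneg_left (afCum_mono m hNM) (hu m)

end Factorizations

section RenewalFunction

variable {P : Set ℕ} {ρ s : ℝ}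

/-- The weighted count of factorizations of the integers up to `exp y`, divided by its order of
growth `exp (ρ * y)`. -/
def renewalFunction (P : Set ℕ) (ρ : ℝ) : (ℕ → ℝ) →ₗ[ℝ] (ℝ → ℝ) :=
  LinearMap.pi fun y => Real.exp (-ρ * y) • weightedSum P ⌊Real.exp y⌋₊

lemma renewalFunction_apply (u : ℕ → ℝ) (y : ℝ) :
    renewalFunction P ρ u y = Real.exp (-ρ * y) * weightedSum P ⌊Real.exp y⌋₊ u := rfl

lemma renewalFunction_log {N : ℕ} (hN : N ≠ 0) (u : ℕ → ℝ) :
    renewalFunction P ρ u (Real.log N) = Real.exp (-ρ * Real.log N) * weightedSum P N u := by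
  rw [renewalFunction_apply, Real.exp_log (by positivity), Nat.floor_natCast]

lemma renewalFunction_eq_zero_of_neg (u : ℕ → ℝ) {y : ℝ} (hy : y < 0) :
    renewalFunction P ρ u y = 0 := by
  rw [renewalFunction_apply, Nat.floor_eq_zero.2 (Real.exp_lt_one_iff.2 hy)]
  simp [weightedSum]

/-- The law with jumps `log n`, `n ∈ P`, taken with probability `n ^ (-ρ)`. Convergence of the
Dirichlet series of `P` at `s < ρ` makes the exponential moment of order `ρ - s` finite. -/
def logStepLaw (hP : ∀ n ∈ P, 2 ≤ n) (hρ : HasSum (fun n : P => ((n : ℕ) : ℝ) ^ (-ρ)) 1)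
    (hsρ : s < ρ) (hs : Summable fun n : P => ((n : ℕ) : ℝ) ^ (-s)) : StepLaw P where
  prob n := ((n : ℕ) : ℝ) ^ (-ρ)
  step n := Real.log (n : ℕ)
  gap := Real.log 2
  rate := ρ - s
  prob_pos n := Real.rpow_pos_of_pos (by exact_mod_cast two_pos.trans_le (hP n n.2)) _
  hasSum_prob := hρ
  gap_pos := Real.log_pos one_lt_two
  gap_le_step n := Real.log_le_log two_pos (by exact_mod_cast hP n n.2)
  finite_step_le y := by
    refine ((Set.finite_Iic ⌊Real.exp y⌋₊).preimage Subtype.val_injective.injOn).subset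
      fun n hn => ?_
    have hn₀ : (0 : ℝ) < (n : ℕ) := by exact_mod_cast two_pos.trans_le (hP n n.2)
    exact Nat.le_floor ((Real.log_le_iff_le_exp hn₀).1 hn)
  rate_pos := sub_pos.2 hsρ
  summable_expMoment := hs.congr fun n => by
    have hn₀ : (0 : ℝ) < (n : ℕ) := by exact_mod_cast two_pos.trans_le (hP n n.2)
    rw [mul_comm (ρ - s), ← Real.rpow_def_of_pos hn₀, ← Real.rpow_add hn₀]
    ring_nf

section

variable (hP : ∀ n ∈ P, 2 ≤ n) (hρ : HasSum (fun n : P => ((n : ℕ) : ℝ) ^ (-ρ)) 1)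
  (hsρ : s < ρ) (hs : Summable fun n : P => ((n : ℕ) : ℝ) ^ (-s))

open Classical in
lemma conv_logStepLaw (f : ℝ → ℝ) (y : ℝ) :
    (logStepLaw hP hρ hsρ hs).conv (logStepLaw hP hρ hsρ hs).prob f y
      = ∑ d ∈ Finset.Ioc 0 ⌊Real.exp y⌋₊ with d ∈ P, (d : ℝ) ^ (-ρ) * f (y - Real.log d) := by
  rw [← Finset.sum_subtype_eq_sum_filter, StepLaw.conv_apply]
  refine Finset.sum_congr (Finset.ext fun n => ?_) fun _ _ => rfl
  have hn : 0 < (n : ℕ) := two_pos.trans_le (hP n n.2)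
  rw [StepLaw.mem_upTo, Finset.mem_subtype, Finset.mem_Ioc, and_iff_right hn,
    Nat.le_floor_iff (Real.exp_pos y).le]
  exact Real.log_le_iff_le_exp (by exact_mod_cast hn)

lemma renewalFunction_eq_add_conv (u : ℕ → ℝ) {y : ℝ} (hy : 0 ≤ y) :
    renewalFunction P ρ u y = u 0 * Real.exp (-ρ * y)
      + (logStepLaw hP hρ hsρ hs).conv (logStepLaw hP hρ hsρ hs).prob
          (renewalFunction P ρ fun m => u (m + 1)) y := by
  classical
  have hN : 1 ≤ ⌊Real.exp y⌋₊ := Nat.le_floor (by simpa using hy)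
  rw [conv_logStepLaw, renewalFunction_apply, weightedSum_eq_add_sum hP u hN, mul_add,
    Finset.mul_sum, mul_comm (u 0)]
  refine congrArg _ (Finset.sum_congr rfl fun d hd => ?_)
  have hd₀ : (0 : ℝ) < d := Nat.cast_pos.2 (Finset.mem_Ioc.1 (Finset.mem_filter.1 hd).1).1
  rw [renewalFunction_apply, Real.exp_sub, Real.exp_log hd₀, Nat.floor_div_natCast, ← mul_assoc,
    Real.rpow_def_of_pos hd₀, ← Real.exp_add]
  ring_nf

lemma defect_renewalFunction (u : ℕ → ℝ) {y : ℝ} (hy : 0 ≤ y) :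
    (logStepLaw hP hρ hsρ hs).defect (renewalFunction P ρ u) y = u 0 * Real.exp (-ρ * y)
      + (logStepLaw hP hρ hsρ hs).conv (logStepLaw hP hρ hsρ hs).prob
          (renewalFunction P ρ fun m => u (m + 1) - u m) y := by
  rw [StepLaw.defect_apply, renewalFunction_eq_add_conv hP hρ hsρ hs u hy, add_sub_assoc,
    ← Pi.sub_apply, ← map_sub, ← map_sub]
  rfl

lemma isRenewalMoments_renewalFunction (hs₀ : 0 < s) :
    (logStepLaw hP hρ hsρ hs).IsRenewalMoments ρ (renewalFunction P ρ 1)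
      (renewalFunction P ρ fun m => (m : ℝ)) (renewalFunction P ρ fun m => (m : ℝ) ^ 2) where
  rate_lt := sub_lt_self ρ hs₀
  eq_zero_of_neg _ hy := renewalFunction_eq_zero_of_neg _ hy
  nonneg y := mul_nonneg (Real.exp_pos _).le (weightedSum_nonneg zero_le_one _)
  exp_mul_le y t ht := by
    rw [renewalFunction_apply, renewalFunction_apply, ← mul_assoc, ← Real.exp_add, ← mul_add,
      add_comm t]
    exact mul_le_mul_of_nonneg_left (weightedSum_mono hP zero_le_one
      (Nat.floor_mono (Real.exp_le_exp.2 (le_add_of_nonneg_right ht)))) (Real.exp_pos _).le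
  defect_eq y hy := by
    rw [defect_renewalFunction hP hρ hsρ hs 1 hy, Pi.one_apply, one_mul, add_eq_left]
    simp only [Pi.one_apply, sub_self, ← Pi.zero_def, map_zero, Pi.zero_apply]
  fst_eq_zero_of_neg _ hy := renewalFunction_eq_zero_of_neg _ hy
  defect_fst_eq y hy := by
    rw [defect_renewalFunction hP hρ hsρ hs _ hy, Nat.cast_zero, zero_mul, zero_add]
    simp only [Nat.cast_add_one, add_sub_cancel_left, ← Pi.one_def]
  defect_snd_eq y hy := by
    have hdiff : (fun m : ℕ => ((m + 1 : ℕ) : ℝ) ^ 2 - (m : ℝ) ^ 2)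
        = (2 : ℝ) • (fun m : ℕ => (m : ℝ)) + 1 := by
      ext m
      simp only [Pi.add_apply, Pi.smul_apply, Pi.one_apply, smul_eq_mul, Nat.cast_add_one]
      ring
    rw [defect_renewalFunction hP hρ hsρ hs _ hy, Nat.cast_zero, zero_pow two_ne_zero, zero_mul,
      zero_add, hdiff, map_add, map_smul]

lemma mean_logStepLaw : (logStepLaw hP hρ hsρ hs).mean = -Pderiv1 P ρ := (neg_neg _).symm

lemma relVariance_div_mean_logStepLaw :
    (logStepLaw hP hρ hsρ hs).relVariance / (logStepLaw hP hρ hsρ hs).mean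
      = (-1 / Pderiv1 P ρ) ^ 3 * Pderiv2 P ρ - -1 / Pderiv1 P ρ := by
  have hmean := (logStepLaw hP hρ hsρ hs).mean_pos.ne'
  have hsecond : ∑' n, (logStepLaw hP hρ hsρ hs).prob n * (logStepLaw hP hρ hsρ hs).step n ^ 2
      = Pderiv2 P ρ := rfl
  rw [mean_logStepLaw, neg_ne_zero] at hmean
  rw [StepLaw.relVariance_eq, hsecond, mean_logStepLaw]
  field_simp
  ring

lemma relVariance_logStepLaw_pos (hP₂ : P.Nontrivial) :
    0 < (logStepLaw hP hρ hsρ hs).relVariance := by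
  obtain ⟨a, ha, b, hb, hab⟩ := hP₂
  have hpos : ∀ n ∈ P, (n : ℝ) ∈ Set.Ioi 0 := fun n hn =>
    Set.mem_Ioi.2 (Nat.cast_pos.2 (two_pos.trans_le (hP n hn)))
  refine StepLaw.relVariance_pos _ (a := ⟨a, ha⟩) (b := ⟨b, hb⟩) fun hlog => hab ?_
  exact_mod_cast Real.log_injOn_pos (hpos a ha) (hpos b hb) hlog

end

lemma summable_rpow_neg_of_kappa_lt (hP : ∀ n ∈ P, 2 ≤ n) (hs : kappa P < (s : EReal)) :
    Summable fun n : P => ((n : ℕ) : ℝ) ^ (-s) := by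
  obtain ⟨_, ⟨r, rfl, hr⟩, hrs⟩ := sInf_lt_iff.1 hs
  refine hr.of_nonneg_of_le (fun n => by positivity) fun n => ?_
  exact Real.rpow_le_rpow_of_exponent_le (by exact_mod_cast one_le_two.trans (hP n n.2))
    (neg_le_neg (EReal.coe_lt_coe_iff.1 hrs).le)

end RenewalFunction

/-- **The variance of `Y_N`.** `Var(Y_N) ∼ σ² log N` as `N → ∞`, where
`Var(Y_N) = E(Y_N²) - (E Y_N)²` and `σ² = μ³𝒫''(ρ) - μ`. -/
theorem ordered_factorizations_variance
    (P : Set ℕ) (hP : ∀ n ∈ P, 2 ≤ n) (hP2 : P.Nontrivial)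
    (hκ : 1 < PvalE P (kappa P))
    (ρ : ℝ) (hρ0 : 0 < ρ) (hρκ : kappa P < (ρ : EReal)) (hρ1 : Pval P ρ = 1)
    (μ σsq : ℝ) (hμ : μ = -1 / Pderiv1 P ρ) (hσsq : σsq = μ ^ 3 * Pderiv2 P ρ - μ) :
    Asymptotics.IsEquivalent atTop
      (fun N : ℕ =>
        (∑ n ∈ Finset.Icc 1 N, ∑' m : ℕ, ((m : ℝ)) ^ 2 * (af P m n : ℝ)) / Acum P N
          - ((∑ n ∈ Finset.Icc 1 N, ∑' m : ℕ, (m : ℝ) * (af P m n : ℝ)) / Acum P N) ^ 2)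
      (fun N : ℕ => σsq * Real.log N) := by
  obtain ⟨s, hs, hsρ⟩ := EReal.lt_iff_exists_real_btwn.1 (max_lt hρκ (EReal.coe_pos.2 hρ0))
  have hs₀ : 0 < s := EReal.coe_pos.1 ((le_max_right _ _).trans_lt hs)
  have hsρ : s < ρ := EReal.coe_lt_coe_iff.1 hsρ
  have hsummable := summable_rpow_neg_of_kappa_lt hP ((le_max_left _ _).trans_lt hs)
  have hsum : HasSum (fun n : P => ((n : ℕ) : ℝ) ^ (-ρ)) 1 :=
    hρ1 ▸ (summable_rpow_neg_of_kappa_lt hP hρκ).hasSum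
  have hσ : (logStepLaw hP hsum hsρ hsummable).relVariance
      / (logStepLaw hP hsum hsρ hsummable).mean = σsq := by
    rw [relVariance_div_mean_logStepLaw, hσsq, hμ]
  have hσ₀ : 0 < σsq := hσ ▸ div_pos (relVariance_logStepLaw_pos hP hsum hsρ hsummable hP2)
    (StepLaw.mean_pos _)
  have hmoments := isRenewalMoments_renewalFunction hP hsum hsρ hsummable hs₀
  have hlim := (hmoments.tendsto_variance_div.comp
    (Real.tendsto_log_atTop.comp tendsto_natCast_atTop_atTop)).div_const σsq
  rw [hσ, div_self hσ₀.ne'] at hlim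
  refine isEquivalent_of_tendsto_one (hlim.congr' ?_)
  filter_upwards [eventually_ne_atTop 0] with N hN
  simp only [Function.comp_apply, Pi.div_apply, renewalFunction_log hN, sum_tsum_mul_af hP,
    Acum_eq_weightedSum hP, mul_div_mul_left _ _ (Real.exp_ne_zero _)]
  rw [div_div, mul_comm σsq]
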